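/- Let Ψ be a critical branching mechanism and let ν₀ be a nonzero finite Borel measure on (0,∞). Then there exists a unique weak solution (ν_t)_{t>0} of the generalized Smoluchowski equation with initial data ν₀, i.e. a unique weak solution such that ν_t converges weakly to ν₀ as t → 0⁺. -/

import Mathlib

open MeasureTheory Set Filter

noncomputable section

/-- A test function: continuous on `(0,∞)`, bounded there, with finite limits
at `0⁺` and at `∞`. -/
def IsTestFun (f : ℝ → ℝ) : Prop :=
  ContinuousOn f (Ioi 0) ∧ (∃ M : ℝ, ∀ x ∈ Ioi (0:ℝ), |f x| ≤ M) ∧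
    (∃ l₀ : ℝ, Tendsto f (nhdsWithin 0 (Ioi 0)) (nhds l₀)) ∧
    (∃ linf : ℝ, Tendsto f atTop (nhds linf))

/-- `I_k(ν,f) = m^{-k} ∫_{(0,∞)^k} [f(x₁+⋯+x_k) - Σᵢ f(xᵢ)] ν(dx₁)⋯ν(dx_k)`,
where `m = ν((0,∞))`. -/
noncomputable def Ik (k : ℕ) (ν : Measure ℝ) (f : ℝ → ℝ) : ℝ :=
  (∫ x : Fin k → ℝ, (f (∑ i, x i) - ∑ i, f (x i))
      ∂(Measure.pi fun _ : Fin k => ν.restrict (Ioi 0))) /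
    ((ν (Ioi 0)).toReal) ^ k

/-- `⟨L(ν), f⟩ = Σ_{k≥2} ((-m)^k Ψ⁽ᵏ⁾(m)/k!) I_k(ν,f)` with `m = ν((0,∞))`. -/
noncomputable def Lform (Ψ : ℝ → ℝ) (ν : Measure ℝ) (f : ℝ → ℝ) : ℝ :=
  ∑' k : ℕ,
    ((-((ν (Ioi 0)).toReal)) ^ (k + 2) * iteratedDeriv (k + 2) Ψ ((ν (Ioi 0)).toReal) /
        ((k + 2).factorial : ℝ)) * Ik (k + 2) ν f

/-- Weak solution of the generalized Smoluchowski equation. -/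
def IsWeakSolution (Ψ : ℝ → ℝ) (ν : ℝ → Measure ℝ) : Prop :=
  ∀ f : ℝ → ℝ, IsTestFun f → ∀ s t : ℝ, 0 < s → 0 < t →
    ∫ x in Ioi (0:ℝ), f x ∂(ν t)
      = (∫ x in Ioi (0:ℝ), f x ∂(ν s)) + ∫ τ in s..t, Lform Ψ (ν τ) f

/-- A weak solution with initial data `ν₀`: a weakly measurable family of
nonzero finite measures on `(0,∞)` solving the weak form, converging weakly to
`ν₀` as `t → 0⁺`. -/
def IsWeakSolutionWithData (Ψ : ℝ → ℝ) (ν₀ : Measure ℝ) (ν : ℝ → Measure ℝ) : Prop :=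
  (∀ t : ℝ, 0 < t → IsFiniteMeasure (ν t) ∧ ν t (Ioi 0) ≠ 0 ∧ ν t (Iic 0) = 0) ∧
  (∀ f : ℝ → ℝ, IsTestFun f → Measurable fun t : ℝ => ∫ x in Ioi (0:ℝ), f x ∂(ν t)) ∧
  IsWeakSolution Ψ ν ∧
  (∀ f : ℝ → ℝ, ContinuousOn f (Ioi 0) → (∃ M : ℝ, ∀ x ∈ Ioi (0:ℝ), |f x| ≤ M) →
    Tendsto (fun t => ∫ x in Ioi (0:ℝ), f x ∂(ν t)) (nhdsWithin 0 (Ioi 0))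
      (nhds (∫ x in Ioi (0:ℝ), f x ∂ν₀)))

/-!
On the exponential `x ↦ exp (-(q * x))` the coagulation operator takes the value
`Ψ (m - λ) - Ψ m`, where `m` is the total mass of `ν` and `λ` its Laplace transform at `q`. Along a
weak solution, the mass `m` and all the differences `m - λ` therefore solve the scalar equation
`y' = -Ψ y`, whose solutions are determined by their limit at `0` because `Ψ` is monotone; as
Laplace transforms determine measures, the weak solution is unique.

For existence, let `u t` be the flow of `-Ψ` and `m` the mass of `ν₀`. Taylor expansion of `Ψ`
shows that one Euler step `E y = y - h Ψ y` becomes a power series with nonnegative coefficients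
once it is rewritten as `z ↦ E m - E (m - z)`. This property is stable under composition and
pointwise limits, so `z ↦ u t m - u t (m - z)` is a series `∑ k, c k t * z ^ k` with `c k t ≥ 0`,
and `ν t = ∑ k, c k t • ν₀^{*k}` has the right Laplace transforms. Since test functions are uniform
limits of polynomials in `exp (-x)`, these transforms suffice to verify the weak equation.
-/

section

open Topology NNReal Real Polynomial

/-! ### Power series with nonnegative coefficients -/

/-- `g` is the sum on `s` of a power series centred at `0` with nonnegative coefficients (an
absolutely monotone function, when `s = [0, R)`). -/
def IsNonnegPowerSeriesOn (g : ℝ → ℝ) (s : Set ℝ) : Prop :=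
  ∃ c : ℕ → ℝ, (∀ k, 0 ≤ c k) ∧ ∀ z ∈ s, HasSum (fun k => c k * z ^ k) (g z)

namespace IsNonnegPowerSeriesOn

variable {f g : ℝ → ℝ} {s : Set ℝ} {R : ℝ}

theorem congr (hf : IsNonnegPowerSeriesOn f s) (h : EqOn g f s) : IsNonnegPowerSeriesOn g s := by
  obtain ⟨c, hc, hs⟩ := hf
  exact ⟨c, hc, fun z hz => h hz ▸ hs z hz⟩

theorem id : IsNonnegPowerSeriesOn (fun z => z) s := by
  refine ⟨fun k => if k = 1 then 1 else 0, fun k => by positivity, fun z _ => ?_⟩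
  have := hasSum_single (f := fun k => (if k = 1 then (1 : ℝ) else 0) * z ^ k) 1
    fun k hk => by simp [hk]
  rwa [if_pos rfl, one_mul, pow_one] at this

theorem const {a : ℝ} (ha : 0 ≤ a) : IsNonnegPowerSeriesOn (fun _ => a) s := by
  refine ⟨fun k => if k = 0 then a else 0, fun k => by positivity, fun z _ => ?_⟩
  have := hasSum_single (f := fun k => (if k = 0 then a else 0) * z ^ k) 0
    fun k hk => by simp [hk]
  rwa [if_pos rfl, pow_zero, mul_one] at this

theorem of_hasSum_pow_add {c : ℕ → ℝ} (n : ℕ) (hc : ∀ k, 0 ≤ c k)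
    (h : ∀ z ∈ s, HasSum (fun k => c k * z ^ (k + n)) (g z)) : IsNonnegPowerSeriesOn g s := by
  refine ⟨fun k => if k < n then 0 else c (k - n), fun k => ?_, fun z hz => ?_⟩
  · dsimp only
    split_ifs
    exacts [le_rfl, hc _]
  · have low_terms : ∑ k ∈ Finset.range n, (if k < n then 0 else c (k - n)) * z ^ k = 0 :=
      Finset.sum_eq_zero fun k hk => by rw [if_pos (Finset.mem_range.1 hk), zero_mul]
    refine (hasSum_nat_add_iff' n).1 ?_
    rw [low_terms, sub_zero]
    simpa using h z hz

theorem add (hf : IsNonnegPowerSeriesOn f s) (hg : IsNonnegPowerSeriesOn g s) :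
    IsNonnegPowerSeriesOn (fun z => f z + g z) s := by
  obtain ⟨c, hc, hs⟩ := hf
  obtain ⟨d, hd, ht⟩ := hg
  refine ⟨fun k => c k + d k, fun k => add_nonneg (hc k) (hd k), fun z hz => ?_⟩
  simpa only [add_mul] using (hs z hz).add (ht z hz)

theorem mul (hf : IsNonnegPowerSeriesOn f s) (hg : IsNonnegPowerSeriesOn g s) :
    IsNonnegPowerSeriesOn (fun z => f z * g z) s := by
  obtain ⟨c, hc, hs⟩ := hf
  obtain ⟨d, hd, ht⟩ := hg
  refine ⟨fun k => ∑ p ∈ Finset.HasAntidiagonal.antidiagonal k, c p.1 * d p.2,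
    fun k => Finset.sum_nonneg fun p _ => mul_nonneg (hc _) (hd _), fun z hz => ?_⟩
  have hcn : Summable fun k => ‖c k * z ^ k‖ := (hs z hz).summable.norm
  have hdn : Summable fun k => ‖d k * z ^ k‖ := (ht z hz).summable.norm
  have cauchy := (summable_norm_sum_mul_antidiagonal_of_summable_norm hcn hdn).of_norm.hasSum
  rw [← tsum_mul_tsum_eq_tsum_sum_antidiagonal_of_summable_norm hcn hdn, (hs z hz).tsum_eq,
    (ht z hz).tsum_eq] at cauchy
  refine cauchy.congr_fun fun k => ?_
  rw [Finset.sum_mul]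
  refine Finset.sum_congr rfl fun p hp => ?_
  rw [← Finset.HasAntidiagonal.mem_antidiagonal.1 hp, pow_add]
  ring

theorem pow (hf : IsNonnegPowerSeriesOn f s) (n : ℕ) :
    IsNonnegPowerSeriesOn (fun z => f z ^ n) s := by
  induction n with
  | zero => simpa using const zero_le_one
  | succ n ih => simpa only [pow_succ] using ih.mul hf

theorem sum {ι : Type*} {F : ι → ℝ → ℝ} (t : Finset ι) (hF : ∀ i, IsNonnegPowerSeriesOn (F i) s) :
    IsNonnegPowerSeriesOn (fun z => ∑ i ∈ t, F i z) s := by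
  induction t using Finset.cons_induction with
  | empty => simpa using const le_rfl
  | cons i t hi ih => simpa only [Finset.sum_cons] using (hF i).add ih

/- By the bound `c n k * r ^ k ≤ F n r`, the coefficient sequences stay in a product of compact
intervals; a subsequence converges, and the same bound at `r ∈ (z, R)` dominates the series at
`z`. -/
theorem of_tendsto {F : ℕ → ℝ → ℝ} (hF : ∀ n, IsNonnegPowerSeriesOn (F n) (Ico 0 R))
    (hlim : ∀ z ∈ Ico 0 R, Tendsto (fun n => F n z) atTop (𝓝 (g z))) :
    IsNonnegPowerSeriesOn g (Ico 0 R) := by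
  rcases le_or_gt R 0 with hR | hR
  · exact (const le_rfl).congr (by simp [Ico_eq_empty (not_lt.2 hR)])
  choose c hc hs using hF
  have coeff_le : ∀ r ∈ Ico 0 R, ∃ C, ∀ n k, c n k * r ^ k ≤ C := fun r hr => by
    obtain ⟨C, hC⟩ := (hlim r hr).bddAbove_range
    exact ⟨C, fun n k => (le_hasSum (hs n r hr) k fun j _ =>
      mul_nonneg (hc n j) (pow_nonneg hr.1 j)).trans (hC ⟨n, rfl⟩)⟩
  obtain ⟨C, hC⟩ := coeff_le (R / 2) ⟨by linarith, by linarith⟩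
  have mem_box : ∀ n, c n ∈ Set.pi univ fun k => Icc (0 : ℝ) (C / (R / 2) ^ k) := fun n k _ =>
    ⟨hc n k, (le_div_iff₀ (by positivity)).2 (hC n k)⟩
  obtain ⟨d, hd, φ, hφ, hφd⟩ := (isCompact_univ_pi fun k => isCompact_Icc).tendsto_subseq mem_box
  rw [tendsto_pi_nhds] at hφd
  refine ⟨d, fun k => (hd k trivial).1, fun z hz => ?_⟩
  obtain ⟨r, hzr, hrR⟩ := exists_between hz.2
  have hr : 0 < r := hz.1.trans_lt hzr
  obtain ⟨C', hC'⟩ := coeff_le r ⟨hr.le, hrR⟩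
  have dominated : ∀ n k, ‖c n k * z ^ k‖ ≤ C' * (z / r) ^ k := fun n k => by
    rw [norm_of_nonneg (mul_nonneg (hc n k) (pow_nonneg hz.1 k))]
    calc c n k * z ^ k = c n k * r ^ k * (z / r) ^ k := by
          rw [mul_assoc, ← mul_pow, mul_div_cancel₀ _ hr.ne']
      _ ≤ C' * (z / r) ^ k := by
          gcongr
          exacts [pow_nonneg (div_nonneg hz.1 hr.le) k, hC' n k]
  have geometric : Summable fun k : ℕ => C' * (z / r) ^ k :=
    (summable_geometric_of_lt_one (div_nonneg hz.1 hr.le) ((div_lt_one hr).2 hzr)).mul_left C'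
  have tsum_lim := tendsto_tsum_of_dominated_convergence geometric
    (fun k => (hφd k).mul_const (z ^ k)) (Eventually.of_forall fun n k => dominated (φ n) k)
  simp_rw [Function.comp_apply, fun n => (hs (φ n) z hz).tsum_eq] at tsum_lim
  have summable_d : Summable fun k => d k * z ^ k := geometric.of_norm_bounded fun k =>
    le_of_tendsto ((hφd k).mul_const (z ^ k)).norm (Eventually.of_forall fun n => dominated (φ n) k)
  rw [tendsto_nhds_unique ((hlim z hz).comp hφ.tendsto_atTop) tsum_lim]
  exact summable_d.hasSum

theorem comp {t : Set ℝ} (hg : IsNonnegPowerSeriesOn g t)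
    (hf : IsNonnegPowerSeriesOn f (Ico 0 R)) (hft : MapsTo f (Ico 0 R) t) :
    IsNonnegPowerSeriesOn (fun z => g (f z)) (Ico 0 R) := by
  obtain ⟨c, hc, hs⟩ := hg
  exact of_tendsto (fun n => sum (Finset.range n) fun k => (const (hc k)).mul (hf.pow k))
    fun z hz => (hs _ (hft hz)).tendsto_sum_nat

theorem Icc_of_Ico (hg : IsNonnegPowerSeriesOn g (Ico 0 R)) (hR : 0 < R)
    (hgR : ContinuousWithinAt g (Iio R) R) : IsNonnegPowerSeriesOn g (Icc 0 R) := by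
  obtain ⟨c, hc, hs⟩ := hg
  have left_of_R : ∀ᶠ z in 𝓝[<] R, z ∈ Ico 0 R := Ico_mem_nhdsLT hR
  have term_nonneg : ∀ {z : ℝ}, 0 ≤ z → ∀ k, 0 ≤ c k * z ^ k := fun hz k =>
    mul_nonneg (hc k) (pow_nonneg hz k)
  have sum_le : ∀ n, ∑ k ∈ Finset.range n, c k * R ^ k ≤ g R := fun n => by
    have cont : Continuous fun z : ℝ => ∑ k ∈ Finset.range n, c k * z ^ k := by fun_prop
    refine le_of_tendsto_of_tendsto cont.continuousWithinAt hgR ?_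
    filter_upwards [left_of_R] with z hz
    exact sum_le_hasSum _ (fun k _ => term_nonneg hz.1 k) (hs z hz)
  have summable_R : Summable fun k => c k * R ^ k :=
    summable_of_sum_range_le (term_nonneg hR.le) sum_le
  have le_tsum : g R ≤ ∑' k, c k * R ^ k := by
    refine le_of_tendsto hgR ?_
    filter_upwards [left_of_R] with z hz
    refine hasSum_le (fun k => ?_) (hs z hz) summable_R.hasSum
    exact mul_le_mul_of_nonneg_left (pow_le_pow_left₀ hz.1 hz.2.le k) (hc k)
  refine ⟨c, hc, fun z hz => ?_⟩
  rcases hz.2.lt_or_eq with hzR | rfl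
  · exact hs z ⟨hz.1, hzR⟩
  · rw [le_antisymm le_tsum (summable_R.tsum_le_of_sum_range_le sum_le)]
    exact summable_R.hasSum

/- If `m` is the value of the `n`-th iterate at `R`, the increment of the next iterate is
`w ↦ E m - E (m - w)` composed with the increment of the `n`-th. -/
theorem iterate {E : ℝ → ℝ} (hE : Monotone E) (hE₀ : E 0 = 0) (hEle : ∀ y, 0 ≤ y → E y ≤ y)
    (hE_series : ∀ m ∈ Icc 0 R, IsNonnegPowerSeriesOn (fun z => E m - E (m - z)) (Icc 0 m))
    (n : ℕ) : IsNonnegPowerSeriesOn (fun z => E^[n] R - E^[n] (R - z)) (Ico 0 R) := by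
  rcases le_or_gt R 0 with hR | hR
  · exact (const le_rfl).congr (by simp [Ico_eq_empty (not_lt.2 hR)])
  have iterate_nonneg : ∀ n {y : ℝ}, 0 ≤ y → 0 ≤ E^[n] y := fun n y hy => by
    simpa only [Function.iterate_fixed hE₀] using hE.iterate n hy
  have iterate_le : ∀ n, E^[n] R ≤ R := fun n => by
    induction n with
    | zero => exact le_rfl
    | succ n ih =>
      rw [Function.iterate_succ_apply']
      exact (hEle _ (iterate_nonneg n hR.le)).trans ih
  induction n with
  | zero => exact id.congr fun z _ => by simp
  | succ n ih =>
    refine ((hE_series _ ⟨iterate_nonneg n hR.le, iterate_le n⟩).comp ih fun z hz => ?_).congr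
      fun z _ => by simp only [Function.iterate_succ_apply', sub_sub_cancel]
    have lower := iterate_nonneg n (sub_nonneg.2 hz.2.le)
    have upper := hE.iterate n (sub_le_self R hz.1)
    exact ⟨by linarith, by linarith⟩

end IsNonnegPowerSeriesOn

theorem coeff_zero_eq_of_hasSum_zero_pow {c : ℕ → ℝ} {a : ℝ}
    (h : HasSum (fun k => c k * (0 : ℝ) ^ k) a) : c 0 = a := by
  have := hasSum_single (f := fun k => c k * (0 : ℝ) ^ k) 0 fun k hk => by simp [hk]
  simpa using this.unique h

/- The coefficient of order `k ≥ 2` is halved at least twice when passing from `m` to `m / 2`. -/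
theorem four_mul_hasSum_half_le {c : ℕ → ℝ} {m a b : ℝ} (hm : 0 ≤ m) (hc : ∀ k, 0 ≤ c k)
    (hc₀ : c 0 = 0) (ha : HasSum (fun k => c k * (m / 2) ^ k) a)
    (hb : HasSum (fun k => c k * m ^ k) b) : 4 * a ≤ c 1 * m + b := by
  have linear := hasSum_ite_eq (1 : ℕ) (c 1 * m)
  refine hasSum_le (fun k => ?_) (ha.mul_left 4) (linear.add hb)
  match k with
  | 0 => simp [hc₀]
  | 1 => norm_num; linarith
  | k + 2 =>
    have : (0 : ℝ) ≤ c (k + 2) * m ^ (k + 2) := mul_nonneg (hc _) (pow_nonneg hm _)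
    have half_le : ((1 : ℝ) / 2) ^ k ≤ 1 := pow_le_one₀ (by norm_num) (by norm_num)
    calc 4 * (c (k + 2) * (m / 2) ^ (k + 2))
        = c (k + 2) * m ^ (k + 2) * (1 / 2) ^ k := by rw [div_eq_mul_one_div, mul_pow]; ring
      _ ≤ (if k + 2 = 1 then c 1 * m else 0) + c (k + 2) * m ^ (k + 2) := by
        simpa using mul_le_of_le_one_right this half_le

/-! ### Flows of Lipschitz fields and the Euler scheme -/

section Flow

variable {E : Type*} [NormedAddCommGroup E] [NormedSpace ℝ E] {v : E → E} {K C : ℝ≥0}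
  {γ : ℝ → E} {t h : ℝ}

theorem exists_hasDerivAt_Ioo_of_lipschitzWith_of_bounded [CompleteSpace E]
    (hv : LipschitzWith K v) (hC : ∀ y, ‖v y‖ ≤ C) (x : E) {T : ℝ} (hT : 0 < T) :
    ∃ γ : ℝ → E, γ 0 = x ∧ ∀ t ∈ Ioo (-T) T, HasDerivAt γ (v (γ t)) t := by
  have hv_pl : IsPicardLindelof (fun _ => v) (tmin := -T) (tmax := T)
      ⟨0, by constructor <;> linarith⟩ x (C * T.toNNReal) 0 C K :=
    { lipschitzOnWith := fun _ _ => hv.lipschitzOnWith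
      continuousOn := fun _ _ => continuousOn_const
      norm_le := fun _ _ y _ => hC y
      mul_max_le := by simp [hT.le] }
  obtain ⟨γ, hγ₀, hγ⟩ := hv_pl.exists_eq_forall_mem_Icc_hasDerivWithinAt₀
  exact ⟨γ, hγ₀, fun t ht => (hγ t (Ioo_subset_Icc_self ht)).hasDerivAt (Icc_mem_nhds ht.1 ht.2)⟩

theorem exists_isIntegralCurve_of_lipschitzWith_of_bounded [CompleteSpace E]
    (hv : LipschitzWith K v) (hC : ∀ y, ‖v y‖ ≤ C) (x : E) :
    ∃ γ : ℝ → E, γ 0 = x ∧ IsIntegralCurve γ fun _ => v := by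
  choose γ hγ₀ hγ using fun n : ℕ =>
    exists_hasDerivAt_Ioo_of_lipschitzWith_of_bounded hv hC x (T := n + 1) (by positivity)
  have agree : ∀ (n k : ℕ) (t : ℝ), |t| < n + 1 → |t| < k + 1 → γ n t = γ k t := by
    intro n k t hn hk
    have subset_n := Ioo_subset_Ioo (neg_le_neg (min_le_left (n + 1 : ℝ) (k + 1)))
      (min_le_left (n + 1 : ℝ) (k + 1))
    have subset_k := Ioo_subset_Ioo (neg_le_neg (min_le_right (n + 1 : ℝ) (k + 1)))
      (min_le_right (n + 1 : ℝ) (k + 1))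
    have pos : (0 : ℝ) < min (n + 1 : ℝ) (k + 1) := by positivity
    exact ODE_solution_unique_of_mem_Ioo (v := fun _ => v) (s := fun _ => univ) (t₀ := 0)
      (fun _ _ => hv.lipschitzOnWith) ⟨neg_lt_zero.2 pos, pos⟩
      (fun s hs => ⟨hγ n s (subset_n hs), trivial⟩) (fun s hs => ⟨hγ k s (subset_k hs), trivial⟩)
      (by rw [hγ₀, hγ₀]) (abs_lt.1 (lt_min hn hk))
  have lt_ceil : ∀ t : ℝ, |t| < ⌈|t|⌉₊ + 1 := fun t => (Nat.le_ceil |t|).trans_lt (lt_add_one _)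
  refine ⟨fun t => γ ⌈|t|⌉₊ t, hγ₀ _, fun t => ?_⟩
  refine (hγ ⌈|t|⌉₊ t (abs_lt.1 (lt_ceil t))).congr_of_eventuallyEq ?_
  filter_upwards [continuous_abs.continuousAt.eventually_lt_const (lt_ceil t)] with s hs
  exact agree _ _ s (lt_ceil s) hs

theorem dist_le_mul_exp_of_isIntegralCurve {γ δ : ℝ → E} (hv : LipschitzWith K v)
    (hγ : IsIntegralCurve γ fun _ => v) (hδ : IsIntegralCurve δ fun _ => v) (ht : 0 ≤ t) :
    dist (γ t) (δ t) ≤ dist (γ 0) (δ 0) * exp (K * t) := by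
  simpa using dist_le_of_trajectories_ODE (v := fun _ => v) (a := 0) (b := t) (fun _ => hv)
    hγ.continuous.continuousOn (fun s _ => (hγ s).hasDerivWithinAt)
    hδ.continuous.continuousOn (fun s _ => (hδ s).hasDerivWithinAt) le_rfl t ⟨ht, le_rfl⟩

/-- One step of size `h` of the explicit Euler scheme for the autonomous equation `y' = v y`. -/
def eulerStep (v : E → E) (h : ℝ) (y : E) : E := y + h • v y

theorem lipschitzWith_eulerStep (hv : LipschitzWith K v) (h : ℝ) :
    LipschitzWith (1 + ‖h‖₊ * K) (eulerStep v h) :=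
  LipschitzWith.id.add ((lipschitzWith_smul h).comp hv)

theorem norm_sub_eulerStep_le (hv : LipschitzWith K v) (hγ : IsIntegralCurve γ fun _ => v)
    (hh : 0 ≤ h) (hC : ∀ s ∈ Icc t (t + h), ‖v (γ s)‖ ≤ C) :
    ‖γ (t + h) - eulerStep v h (γ t)‖ ≤ K * C * h ^ 2 := by
  have ht : t ∈ Icc t (t + h) := ⟨le_rfl, by linarith⟩
  have ht' : t + h ∈ Icc t (t + h) := ⟨by linarith, le_rfl⟩
  have displacement_le : ∀ s ∈ Icc t (t + h), ‖γ s - γ t‖ ≤ C * h := fun s hs => by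
    refine ((convex_Icc _ _).norm_image_sub_le_of_norm_hasDerivWithin_le
      (fun r _ => (hγ r).hasDerivWithinAt) hC ht hs).trans ?_
    rw [Real.norm_of_nonneg (sub_nonneg.2 hs.1)]
    gcongr
    linarith [hs.2]
  have hderiv : ∀ s, HasDerivAt (fun s => γ s - s • v (γ t)) (v (γ s) - v (γ t)) s := fun s => by
    simpa using (hγ s).fun_sub ((hasDerivAt_id s).smul_const (v (γ t)))
  have deriv_le : ∀ s ∈ Icc t (t + h), ‖v (γ s) - v (γ t)‖ ≤ K * (C * h) := fun s hs =>
    (hv.norm_sub_le _ _).trans (by gcongr; exact displacement_le s hs)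
  have := (convex_Icc _ _).norm_image_sub_le_of_norm_hasDerivWithin_le
    (fun s _ => (hderiv s).hasDerivWithinAt) deriv_le ht ht'
  rw [add_sub_cancel_left, Real.norm_of_nonneg hh] at this
  convert this using 1
  · rw [eulerStep, add_smul]
    congr 1
    abel
  · ring

theorem norm_sub_iterate_eulerStep_le (hv : LipschitzWith K v)
    (hγ : IsIntegralCurve γ fun _ => v) (hh : 0 ≤ h) (n : ℕ)
    (hC : ∀ s ∈ Icc 0 (n * h), ‖v (γ s)‖ ≤ C) :
    ‖γ (n * h) - (eulerStep v h)^[n] (γ 0)‖ ≤ n * (K * C * h ^ 2) * exp (n * (h * K)) := by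
  induction n with
  | zero => simp
  | succ n ih =>
    have hC' : ∀ s ∈ Icc 0 (n * h), ‖v (γ s)‖ ≤ C := fun s hs =>
      hC s ⟨hs.1, hs.2.trans (by gcongr; exact n.le_succ)⟩
    have time_succ : ((n + 1 : ℕ) : ℝ) * h = n * h + h := by push_cast; ring
    have consistency : ‖γ (n * h + h) - eulerStep v h (γ (n * h))‖ ≤ K * C * h ^ 2 :=
      norm_sub_eulerStep_le hv hγ hh fun s hs =>
        hC s ⟨(by positivity : (0 : ℝ) ≤ n * h).trans hs.1, by rw [time_succ]; exact hs.2⟩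
    have stability := (lipschitzWith_eulerStep hv h).norm_sub_le (γ (n * h))
      ((eulerStep v h)^[n] (γ 0))
    have growth : (1 + h * K) * exp (n * (h * K)) ≤ exp ((n + 1) * (h * K)) := by
      rw [add_one_mul (n : ℝ), Real.exp_add, mul_comm, add_comm 1]
      gcongr
      exact Real.add_one_le_exp _
    rw [Function.iterate_succ_apply', time_succ]
    push_cast [Real.norm_of_nonneg hh] at stability ⊢
    have one_le : 1 ≤ exp ((n + 1) * (h * K)) := Real.one_le_exp (by positivity)
    calc ‖γ (n * h + h) - eulerStep v h ((eulerStep v h)^[n] (γ 0))‖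
        ≤ K * C * h ^ 2 + (1 + h * K) * (n * (K * C * h ^ 2) * exp (n * (h * K))) := by
          refine (norm_sub_le_norm_sub_add_norm_sub _ (eulerStep v h (γ (n * h))) _).trans ?_
          refine add_le_add consistency (stability.trans ?_)
          gcongr
          exact ih hC'
      _ = K * C * h ^ 2 * 1 + n * (K * C * h ^ 2) * ((1 + h * K) * exp (n * (h * K))) := by ring
      _ ≤ K * C * h ^ 2 * exp ((n + 1) * (h * K))
          + n * (K * C * h ^ 2) * exp ((n + 1) * (h * K)) := by gcongr
      _ = (n + 1) * (K * C * h ^ 2) * exp ((n + 1) * (h * K)) := by ring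

theorem tendsto_iterate_eulerStep (hv : LipschitzWith K v) (hγ : IsIntegralCurve γ fun _ => v)
    (ht : 0 ≤ t) : Tendsto (fun n : ℕ => (eulerStep v (t / n))^[n] (γ 0)) atTop (𝓝 (γ t)) := by
  obtain ⟨C, hC⟩ := (isCompact_Icc (a := 0) (b := t)).exists_bound_of_continuousOn
    (hv.continuous.comp hγ.continuous).continuousOn
  have hlim : Tendsto (fun n : ℕ => K * C.toNNReal * t ^ 2 * exp (t * K) / n) atTop (𝓝 0) :=
    tendsto_const_div_atTop_nhds_zero_nat _
  rw [tendsto_iff_norm_sub_tendsto_zero]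
  refine squeeze_zero' (Eventually.of_forall fun _ => norm_nonneg _) ?_ hlim
  filter_upwards [eventually_gt_atTop 0] with n hn
  have hnt : n * (t / n) = t := mul_div_cancel₀ _ (Nat.cast_ne_zero.2 hn.ne')
  have error_le := norm_sub_iterate_eulerStep_le (h := t / n) (C := C.toNNReal) hv hγ
    (by positivity) n (by
      rw [hnt]
      exact fun s hs => (hC s hs).trans (Real.le_coe_toNNReal C))
  rw [hnt, norm_sub_rev, ← mul_assoc (n : ℝ) (t / n) K, hnt] at error_le
  convert error_le using 1
  field_simp

end Flow

section ScalarFlow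

variable {v : ℝ → ℝ} {K : ℝ≥0} {γ δ : ℝ → ℝ} {t h : ℝ}

theorem monotone_eulerStep (hv : LipschitzWith K v) (hh : 0 ≤ h) (hhK : h * K ≤ 1) :
    Monotone (eulerStep v h) := fun x y hxy => by
  have lip := (le_abs_self _).trans (hv.dist_le_mul x y)
  rw [Real.dist_eq, abs_sub_comm, abs_of_nonneg (sub_nonneg.2 hxy)] at lip
  simp only [eulerStep, smul_eq_mul]
  nlinarith

theorem eventually_div_mul_le_one (t K : ℝ) : ∀ᶠ n : ℕ in atTop, t / n * K ≤ 1 := by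
  have : Tendsto (fun n : ℕ => t / n * K) atTop (𝓝 0) := by
    simpa using (tendsto_const_div_atTop_nhds_zero_nat t).mul_const K
  exact this.eventually_le_const one_pos

theorem isIntegralCurve_le_of_le (hv : LipschitzWith K v) (hγ : IsIntegralCurve γ fun _ => v)
    (hδ : IsIntegralCurve δ fun _ => v) (h₀ : γ 0 ≤ δ 0) (ht : 0 ≤ t) : γ t ≤ δ t := by
  refine le_of_tendsto_of_tendsto (tendsto_iterate_eulerStep hv hγ ht)
    (tendsto_iterate_eulerStep hv hδ ht) ?_
  filter_upwards [eventually_div_mul_le_one t K] with n hn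
  exact (monotone_eulerStep hv (by positivity) hn).iterate n h₀

theorem isIntegralCurve_pos (hv : LipschitzWith K v) (hv₀ : v 0 = 0)
    (hγ : IsIntegralCurve γ fun _ => v) (h₀ : 0 < γ 0) (ht : 0 ≤ t) : 0 < γ t := by
  have hzero : IsIntegralCurve (fun _ => (0 : ℝ)) fun _ => v := fun s => by
    simpa only [hv₀] using hasDerivAt_const s (0 : ℝ)
  refine (isIntegralCurve_le_of_le hv hzero hγ h₀.le ht).lt_of_ne fun he => h₀.ne' ?_
  exact congrFun (ODE_solution_unique_univ (v := fun _ => v) (s := fun _ => univ) (t₀ := t)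
    (fun _ => hv.lipschitzOnWith) (fun s => ⟨hγ s, trivial⟩) (fun s => ⟨hzero s, trivial⟩)
    he.symm) 0

theorem isNonnegPowerSeriesOn_flow_increment {φ : ℝ → ℝ → ℝ} {R : ℝ} (hR : 0 < R)
    (hv : LipschitzWith K v) (hv₀ : v 0 = 0) (hv_nonpos : ∀ y, 0 ≤ y → v y ≤ 0)
    (hφ₀ : ∀ x, φ x 0 = x) (hφ : ∀ x, IsIntegralCurve (φ x) fun _ => v)
    (h_series : ∀ h : ℝ, 0 ≤ h → h * K ≤ 1 → ∀ m ∈ Icc 0 R,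
      IsNonnegPowerSeriesOn (fun z => eulerStep v h m - eulerStep v h (m - z)) (Icc 0 m))
    (ht : 0 ≤ t) : IsNonnegPowerSeriesOn (fun z => φ R t - φ (R - z) t) (Icc 0 R) := by
  have euler_lim : ∀ x, Tendsto (fun n : ℕ => (eulerStep v (t / n))^[n] x) atTop (𝓝 (φ x t)) :=
    fun x => by simpa only [hφ₀] using tendsto_iterate_eulerStep hv (hφ x) ht
  obtain ⟨N, hN⟩ := eventually_atTop.1 (eventually_div_mul_le_one t K)
  have on_Ico : IsNonnegPowerSeriesOn (fun z => φ R t - φ (R - z) t) (Ico 0 R) := by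
    refine .of_tendsto (F := fun n z => (eulerStep v (t / (n + N : ℕ)))^[n + N] R
      - (eulerStep v (t / (n + N : ℕ)))^[n + N] (R - z)) (fun n => ?_) fun z _ =>
        (tendsto_add_atTop_iff_nat N).2 ((euler_lim R).sub (euler_lim (R - z)))
    have step_nonneg : 0 ≤ t / (n + N : ℕ) := by positivity
    have step_small := hN (n + N) (Nat.le_add_left N n)
    refine .iterate (monotone_eulerStep hv step_nonneg step_small) (by simp [eulerStep, hv₀])
      (fun y hy => ?_) (h_series _ step_nonneg step_small) _
    simpa [eulerStep] using mul_nonpos_of_nonneg_of_nonpos step_nonneg (hv_nonpos y hy)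
  have lipschitz : LipschitzWith (exp (K * t)).toNNReal fun x => φ x t :=
    .of_dist_le_mul fun x y => by
      rw [Real.coe_toNNReal _ (exp_pos _).le, mul_comm]
      simpa only [hφ₀] using dist_le_mul_exp_of_isIntegralCurve hv (hφ x) (hφ y) ht
  refine on_Ico.Icc_of_Ico hR (Continuous.continuousWithinAt ?_)
  exact continuous_const.sub (lipschitz.continuous.comp (continuous_const.sub continuous_id))

end ScalarFlow

/-! ### Critical branching mechanisms -/

theorem exp_neg_le_one {y : ℝ} (hy : 0 ≤ y) : exp (-y) ≤ 1 :=
  exp_le_one_iff.2 (neg_nonpos.2 hy)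

theorem one_sub_exp_neg_le (y : ℝ) : 1 - exp (-y) ≤ y := by
  linarith [one_sub_le_exp_neg y]

theorem exp_neg_sub_one_add_nonneg (y : ℝ) : 0 ≤ exp (-y) - 1 + y := by
  linarith [one_sub_le_exp_neg y]

theorem exp_neg_sub_one_add_le_sq {y : ℝ} (hy : 0 ≤ y) : exp (-y) - 1 + y ≤ y ^ 2 := by
  have cancel : exp (-y) * exp y = 1 := by rw [← Real.exp_add, neg_add_cancel, Real.exp_zero]
  nlinarith [add_one_le_exp y, exp_pos (-y), exp_neg_le_one hy]

theorem exp_neg_sub_one_add_monotoneOn : MonotoneOn (fun y => exp (-y) - 1 + y) (Ici 0) :=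
    fun y hy z _ hyz => by
  have split : exp (-z) = exp (-y) * exp (-(z - y)) := by
    rw [← Real.exp_add]
    ring_nf
  have := mul_le_mul (exp_neg_le_one hy) (one_sub_exp_neg_le (z - y))
    (sub_nonneg.2 (exp_neg_le_one (sub_nonneg.2 hyz))) zero_le_one
  linarith

theorem pow_mul_exp_neg_le {m x : ℝ} (hm : 0 < m) (hx : 0 ≤ x) (k : ℕ) :
    x ^ k * exp (-(m * x)) ≤ k.factorial / m ^ k := by
  have cancel : exp (-(m * x)) * exp (m * x) = 1 := by
    rw [← Real.exp_add, neg_add_cancel, Real.exp_zero]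
  have hpow := pow_div_factorial_le_exp (m * x) (mul_nonneg hm.le hx) k
  rw [div_le_iff₀ (by positivity), mul_pow] at hpow
  rw [le_div_iff₀ (by positivity)]
  calc x ^ k * exp (-(m * x)) * m ^ k = exp (-(m * x)) * (m ^ k * x ^ k) := by ring
    _ ≤ exp (-(m * x)) * (exp (m * x) * k.factorial) := by gcongr
    _ = k.factorial := by rw [← mul_assoc, cancel, one_mul]

theorem hasSum_pow_div_factorial_add (n : ℕ) (y : ℝ) :
    HasSum (fun k => y ^ (k + n) / (k + n).factorial)
      (exp y - ∑ k ∈ Finset.range n, y ^ k / k.factorial) := by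
  have := NormedSpace.expSeries_div_hasSum_exp (𝔸 := ℝ) y
  rw [← exp_eq_exp_ℝ] at this
  exact (hasSum_nat_add_iff' n).2 this

theorem hasDerivAt_exp_neg_mul (x u : ℝ) :
    HasDerivAt (fun u : ℝ => exp (-(u * x))) (-(x * exp (-(u * x)))) u := by
  simpa [mul_comm] using ((hasDerivAt_id u).mul_const x).neg.exp

theorem hasSum_integral_of_nonneg_of_integrable {ι α : Type*} [Countable ι] [MeasurableSpace α]
    {μ : Measure α} {F : ι → α → ℝ} {G : α → ℝ} (hF : ∀ i, AEStronglyMeasurable (F i) μ)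
    (hF_nonneg : ∀ i, 0 ≤ᵐ[μ] F i) (hG : Integrable G μ)
    (hsum : ∀ᵐ a ∂μ, HasSum (fun i => F i a) (G a)) :
    HasSum (fun i => ∫ a, F i a ∂μ) (∫ a, G a ∂μ) := by
  refine hasSum_integral_of_dominated_convergence F hF (fun i => ?_)
    (hsum.mono fun _ h => h.summable) (hG.congr (hsum.mono fun _ h => h.tsum_eq.symm)) hsum
  filter_upwards [hF_nonneg i] with a ha using (norm_of_nonneg ha).le

/-- The characteristics of a critical branching mechanism `Ψ`: its quadratic coefficient `β` and its
jump measure `π`, encoded as a measure on `ℝ` concentrated on `(0, ∞)`. -/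
structure CriticalBranchingMechanism where
  quadCoeff : ℝ≥0
  jumpMeasure : Measure ℝ
  ae_pos : ∀ᵐ x ∂jumpMeasure, 0 < x
  integrable_min : Integrable (fun x => min x (x ^ 2)) jumpMeasure

namespace CriticalBranchingMechanism

/-- The function `Ψ`, given by its Lévy-Khintchine formula; it is meaningful on `[0, ∞)` only. -/
def eval (Ψ : CriticalBranchingMechanism) (u : ℝ) : ℝ :=
  Ψ.quadCoeff * u ^ 2 + ∫ x, (exp (-(u * x)) - 1 + u * x) ∂Ψ.jumpMeasure

instance : CoeFun CriticalBranchingMechanism fun _ => ℝ → ℝ := ⟨eval⟩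

/-- The first derivative `Ψ'`, extended by `Ψ' 0 = 0` to the boundary point `0`. -/
def firstDeriv (Ψ : CriticalBranchingMechanism) (u : ℝ) : ℝ :=
  2 * Ψ.quadCoeff * u + ∫ x, x * (1 - exp (-(u * x))) ∂Ψ.jumpMeasure

/-- The moment `∫ x^(k+2) e^(-ux) π(dx)`, which up to sign is the jump part of the derivative of
order `k + 2` of `Ψ`. -/
def tiltedMoment (Ψ : CriticalBranchingMechanism) (k : ℕ) (u : ℝ) : ℝ :=
  ∫ x, x ^ (k + 2) * exp (-(u * x)) ∂Ψ.jumpMeasure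

/-- The coefficient of `w^(k+2)` in the expansion of `Ψ (m - w)` at `w = 0`, that is
`(-1)^k Ψ⁽ᵏ⁺²⁾(m) / (k+2)!`. -/
def taylorCoeff (Ψ : CriticalBranchingMechanism) (m : ℝ) (k : ℕ) : ℝ :=
  (if k = 0 then (Ψ.quadCoeff : ℝ) else 0) + Ψ.tiltedMoment k m / (k + 2).factorial

variable (Ψ : CriticalBranchingMechanism) {u v m w : ℝ}

theorem integrable_of_abs_le {f : ℝ → ℝ} (hf : Measurable f) {A B : ℝ}
    (hA : ∀ x, 0 < x → |f x| ≤ A * x) (hB : ∀ x, 0 < x → |f x| ≤ B * x ^ 2) :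
    Integrable f Ψ.jumpMeasure := by
  refine (Ψ.integrable_min.const_mul (max A B)).mono' hf.aestronglyMeasurable ?_
  filter_upwards [Ψ.ae_pos] with x hx
  rcases min_choice x (x ^ 2) with h | h <;> rw [h]
  · exact (hA x hx).trans (by gcongr; exact le_max_left A B)
  · exact (hB x hx).trans (by gcongr; exact le_max_right A B)

theorem integrable_exp_neg_sub_one_add (hu : 0 ≤ u) :
    Integrable (fun x => exp (-(u * x)) - 1 + u * x) Ψ.jumpMeasure := by
  refine Ψ.integrable_of_abs_le (A := u) (B := u ^ 2) (by fun_prop) ?_ ?_ <;> intro x hx <;>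
    rw [abs_of_nonneg (exp_neg_sub_one_add_nonneg _)]
  · linarith [exp_neg_le_one (mul_nonneg hu hx.le)]
  · simpa only [mul_pow] using exp_neg_sub_one_add_le_sq (mul_nonneg hu hx.le)

theorem integrable_mul_one_sub_exp_neg (hu : 0 ≤ u) :
    Integrable (fun x => x * (1 - exp (-(u * x)))) Ψ.jumpMeasure := by
  refine Ψ.integrable_of_abs_le (A := 1) (B := u) (by fun_prop) ?_ ?_ <;> intro x hx <;>
    rw [abs_of_nonneg (mul_nonneg hx.le (sub_nonneg.2 (exp_neg_le_one (mul_nonneg hu hx.le))))]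
  · nlinarith [exp_pos (-(u * x))]
  · nlinarith [one_sub_exp_neg_le (u * x)]

theorem integrable_pow_mul_exp_neg (hm : 0 < m) (k : ℕ) :
    Integrable (fun x => x ^ (k + 2) * exp (-(m * x))) Ψ.jumpMeasure := by
  refine Ψ.integrable_of_abs_le (A := (k + 1).factorial / m ^ (k + 1)) (B := k.factorial / m ^ k)
    (by fun_prop) ?_ ?_ <;> intro x hx <;> rw [abs_of_nonneg (by positivity)]
  · calc x ^ (k + 2) * exp (-(m * x)) = x ^ (k + 1) * exp (-(m * x)) * x := by ring
      _ ≤ _ := by gcongr; exact pow_mul_exp_neg_le hm hx.le (k + 1)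
  · calc x ^ (k + 2) * exp (-(m * x)) = x ^ k * exp (-(m * x)) * x ^ 2 := by ring
      _ ≤ _ := by gcongr; exact pow_mul_exp_neg_le hm hx.le k

@[simp]
theorem eval_zero : Ψ 0 = 0 := by simp [eval]

@[simp]
theorem firstDeriv_zero : Ψ.firstDeriv 0 = 0 := by simp [firstDeriv]

theorem firstDeriv_monotoneOn : MonotoneOn Ψ.firstDeriv (Ici 0) := fun u hu v hv huv => by
  refine add_le_add (by gcongr) (integral_mono_ae (Ψ.integrable_mul_one_sub_exp_neg hu)
    (Ψ.integrable_mul_one_sub_exp_neg hv) ?_)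
  filter_upwards [Ψ.ae_pos] with x hx
  gcongr

theorem firstDeriv_nonneg (hu : 0 ≤ u) : 0 ≤ Ψ.firstDeriv u := by
  simpa using Ψ.firstDeriv_monotoneOn self_mem_Ici hu hu

theorem hasDerivAt_eval (hu : 0 < u) : HasDerivAt Ψ (Ψ.firstDeriv u) u := by
  have quad : HasDerivAt (fun u : ℝ => Ψ.quadCoeff * u ^ 2) (2 * Ψ.quadCoeff * u) u :=
    ((hasDerivAt_pow 2 u).const_mul _).congr_deriv (by push_cast; ring)
  refine quad.add (hasDerivAt_integral_of_dominated_loc_of_deriv_le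
    (F := fun u x => exp (-(u * x)) - 1 + u * x) (F' := fun u x => x * (1 - exp (-(u * x))))
    (bound := fun x => x * (1 - exp (-(2 * u * x)))) (Ioo_mem_nhds hu (lt_two_mul_self hu))
    (Eventually.of_forall fun v => by fun_prop) (Ψ.integrable_exp_neg_sub_one_add hu.le)
    (by fun_prop) ?_ (Ψ.integrable_mul_one_sub_exp_neg (by positivity)) ?_).2
  · filter_upwards [Ψ.ae_pos] with x hx v hv
    have := exp_neg_le_one (mul_nonneg hv.1.le hx.le)
    rw [norm_of_nonneg (mul_nonneg hx.le (sub_nonneg.2 this))]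
    gcongr
    exact hv.2.le
  · filter_upwards with x v _
    refine (((hasDerivAt_exp_neg_mul x v).sub_const 1).add
      ((hasDerivAt_id v).mul_const x)).congr_deriv ?_
    ring

theorem hasDerivAt_firstDeriv (hu : 0 < u) :
    HasDerivAt Ψ.firstDeriv (2 * Ψ.quadCoeff + Ψ.tiltedMoment 0 u) u := by
  have lin : HasDerivAt (fun u : ℝ => 2 * Ψ.quadCoeff * u) (2 * Ψ.quadCoeff) u := by
    simpa using (hasDerivAt_id u).const_mul (2 * (Ψ.quadCoeff : ℝ))
  refine lin.add (hasDerivAt_integral_of_dominated_loc_of_deriv_le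
    (F := fun u x => x * (1 - exp (-(u * x)))) (F' := fun u x => x ^ (0 + 2) * exp (-(u * x)))
    (bound := fun x => x ^ (0 + 2) * exp (-(u / 2 * x))) (Ioi_mem_nhds (half_lt_self hu))
    (Eventually.of_forall fun v => by fun_prop) (Ψ.integrable_mul_one_sub_exp_neg hu.le)
    (by fun_prop) ?_ (Ψ.integrable_pow_mul_exp_neg (half_pos hu) 0) ?_).2
  · filter_upwards [Ψ.ae_pos] with x hx v hv
    rw [norm_of_nonneg (by positivity)]
    gcongr
    exact (mem_Ioi.1 hv).le
  · filter_upwards with x v _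
    exact (((hasDerivAt_exp_neg_mul x v).const_sub 1).const_mul x).congr_deriv (by ring)

theorem hasDerivAt_tiltedMoment (hu : 0 < u) (k : ℕ) :
    HasDerivAt (Ψ.tiltedMoment k) (-Ψ.tiltedMoment (k + 1) u) u := by
  rw [tiltedMoment, ← integral_neg]
  refine (hasDerivAt_integral_of_dominated_loc_of_deriv_le
    (F := fun u x => x ^ (k + 2) * exp (-(u * x)))
    (F' := fun u x => -(x ^ (k + 3) * exp (-(u * x))))
    (bound := fun x => x ^ (k + 3) * exp (-(u / 2 * x))) (Ioi_mem_nhds (half_lt_self hu))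
    (Eventually.of_forall fun v => by fun_prop) (Ψ.integrable_pow_mul_exp_neg hu k)
    (by fun_prop) ?_ (Ψ.integrable_pow_mul_exp_neg (half_pos hu) (k + 1)) ?_).2
  · filter_upwards [Ψ.ae_pos] with x hx v hv
    rw [norm_neg, norm_of_nonneg (by positivity)]
    gcongr
    exact (mem_Ioi.1 hv).le
  · filter_upwards with x v _
    exact ((hasDerivAt_exp_neg_mul x v).const_mul (x ^ (k + 2))).congr_deriv (by ring)

theorem iteratedDeriv_add_two (k : ℕ) (hm : 0 < m) :
    iteratedDeriv (k + 2) Ψ m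
      = (if k = 0 then 2 * (Ψ.quadCoeff : ℝ) else 0) + (-1) ^ k * Ψ.tiltedMoment k m := by
  induction k generalizing m with
  | zero =>
    have hderiv : deriv Ψ =ᶠ[𝓝 m] Ψ.firstDeriv := by
      filter_upwards [Ioi_mem_nhds hm] with u hu using (Ψ.hasDerivAt_eval hu).deriv
    rw [iteratedDeriv_succ, iteratedDeriv_one, hderiv.deriv_eq, (Ψ.hasDerivAt_firstDeriv hm).deriv]
    simp
  | succ k ih =>
    have hderiv : iteratedDeriv (k + 2) Ψ =ᶠ[𝓝 m] fun u =>
        (if k = 0 then 2 * (Ψ.quadCoeff : ℝ) else 0) + (-1) ^ k * Ψ.tiltedMoment k u := by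
      filter_upwards [Ioi_mem_nhds hm] with u hu using ih hu
    rw [iteratedDeriv_succ, hderiv.deriv_eq,
      (((Ψ.hasDerivAt_tiltedMoment hm k).const_mul _).const_add _).deriv]
    simp [pow_succ]

theorem taylorCoeff_eq_iteratedDeriv (hm : 0 < m) (k : ℕ) :
    Ψ.taylorCoeff m k = (-1) ^ k * iteratedDeriv (k + 2) Ψ m / (k + 2).factorial := by
  rw [Ψ.iteratedDeriv_add_two k hm, taylorCoeff, mul_add, ← mul_assoc, ← mul_pow, neg_one_mul,
    neg_neg, one_pow, one_mul, add_div]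
  congr 1
  split_ifs with hk
  · subst hk
    norm_num
  · simp

theorem taylorCoeff_nonneg (m : ℝ) (k : ℕ) : 0 ≤ Ψ.taylorCoeff m k := by
  have : 0 ≤ Ψ.tiltedMoment k m := integral_nonneg_of_ae <| by
    filter_upwards [Ψ.ae_pos] with x hx
    rw [Pi.zero_apply]
    positivity
  unfold taylorCoeff
  positivity

theorem hasSum_taylorCoeff (hm : 0 < m) (hw : 0 ≤ w) (hwm : w ≤ m) :
    HasSum (fun k => Ψ.taylorCoeff m k * w ^ (k + 2)) (Ψ (m - w) - Ψ m + w * Ψ.firstDeriv m) := by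
  have int_sub := Ψ.integrable_exp_neg_sub_one_add (sub_nonneg.2 hwm)
  have int_m := Ψ.integrable_exp_neg_sub_one_add hm.le
  have int_diff : Integrable (fun x => exp (-((m - w) * x)) - 1 + (m - w) * x
    - (exp (-(m * x)) - 1 + m * x)) Ψ.jumpMeasure := int_sub.sub int_m
  have int_deriv := (Ψ.integrable_mul_one_sub_exp_neg hm.le).const_mul w
  have jump_part : HasSum
      (fun k => ∫ x, (w * x) ^ (k + 2) / (k + 2).factorial * exp (-(m * x)) ∂Ψ.jumpMeasure)
      (∫ x, (exp (-((m - w) * x)) - 1 + (m - w) * x - (exp (-(m * x)) - 1 + m * x)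
        + w * (x * (1 - exp (-(m * x))))) ∂Ψ.jumpMeasure) := by
    refine hasSum_integral_of_nonneg_of_integrable (fun k => by fun_prop) (fun k => ?_)
      (int_diff.add int_deriv) (Eventually.of_forall fun x => ?_)
    · filter_upwards [Ψ.ae_pos] with x hx
      rw [Pi.zero_apply]
      positivity
    · have split : exp (-((m - w) * x)) = exp (w * x) * exp (-(m * x)) := by
        rw [← Real.exp_add]
        ring_nf
      have value : exp (-((m - w) * x)) - 1 + (m - w) * x - (exp (-(m * x)) - 1 + m * x)
            + w * (x * (1 - exp (-(m * x))))
          = (exp (w * x) - ∑ k ∈ Finset.range 2, (w * x) ^ k / k.factorial) * exp (-(m * x)) := by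
        simp [split, Finset.sum_range_succ]
        ring
      rw [value]
      exact (hasSum_pow_div_factorial_add 2 (w * x)).mul_right _
  have quad_part := hasSum_ite_eq 0 (Ψ.quadCoeff * w ^ 2)
  rw [integral_add int_diff int_deriv, integral_sub int_sub int_m,
    integral_const_mul] at jump_part
  convert quad_part.add jump_part using 1
  · ext k
    rw [taylorCoeff, tiltedMoment, add_mul, ite_mul, zero_mul, ← integral_div,
      ← integral_mul_const]
    congr 1
    · split_ifs with hk <;> simp [hk]
    · congr 1 with x
      ring
  · unfold eval firstDeriv
    ring

theorem hasSum_taylorCoeff_firstDeriv (hm : 0 < m) :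
    HasSum (fun k => (k + 2) * (Ψ.taylorCoeff m k * m ^ (k + 1))) (Ψ.firstDeriv m) := by
  have jump_part : HasSum
      (fun k => ∫ x, x * ((m * x) ^ (k + 1) / (k + 1).factorial) * exp (-(m * x)) ∂Ψ.jumpMeasure)
      (∫ x, x * (1 - exp (-(m * x))) ∂Ψ.jumpMeasure) := by
    refine hasSum_integral_of_nonneg_of_integrable (fun k => by fun_prop) (fun k => ?_)
      (Ψ.integrable_mul_one_sub_exp_neg hm.le) (Eventually.of_forall fun x => ?_)
    · filter_upwards [Ψ.ae_pos] with x hx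
      rw [Pi.zero_apply]
      positivity
    · have cancel : exp (m * x) * exp (-(m * x)) = 1 := by
        rw [← Real.exp_add, add_neg_cancel, Real.exp_zero]
      have value : x * (1 - exp (-(m * x))) = x * (exp (m * x)
          - ∑ k ∈ Finset.range 1, (m * x) ^ k / k.factorial) * exp (-(m * x)) := by
        simp only [Finset.sum_range_one, pow_zero, Nat.factorial_zero, Nat.cast_one, div_one]
        linear_combination -x * cancel
      rw [value]
      exact ((hasSum_pow_div_factorial_add 1 (m * x)).mul_left x).mul_right _
  have quad_part := hasSum_ite_eq 0 (2 * Ψ.quadCoeff * m)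
  refine (quad_part.add jump_part).congr_fun fun k => ?_
  have jump_coeff :
      ∫ x, x * ((m * x) ^ (k + 1) / (k + 1).factorial) * exp (-(m * x)) ∂Ψ.jumpMeasure
        = (k + 2) * (Ψ.tiltedMoment k m / (k + 2).factorial * m ^ (k + 1)) := by
    rw [tiltedMoment, ← integral_div, ← integral_mul_const, ← integral_const_mul]
    congr 1 with x
    rw [Nat.factorial_succ (k + 1)]
    push_cast
    field_simp
    ring
  rw [jump_coeff, taylorCoeff]
  split_ifs with hk
  · subst hk
    push_cast
    ring
  · ring

theorem eval_sub_le (hu : 0 ≤ u) (huv : u ≤ v) (hv : 0 < v) :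
    Ψ v - Ψ u ≤ Ψ.firstDeriv v * (v - u) := by
  have expansion := Ψ.hasSum_taylorCoeff hv (sub_nonneg.2 huv) (sub_le_self v hu)
  rw [sub_sub_cancel] at expansion
  have := expansion.nonneg fun k =>
    mul_nonneg (Ψ.taylorCoeff_nonneg v k) (pow_nonneg (sub_nonneg.2 huv) _)
  linarith

theorem eval_monotoneOn : MonotoneOn Ψ (Ici 0) := fun u hu v hv huv => by
  refine add_le_add (by gcongr) (integral_mono_ae (Ψ.integrable_exp_neg_sub_one_add hu)
    (Ψ.integrable_exp_neg_sub_one_add hv) ?_)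
  filter_upwards [Ψ.ae_pos] with x hx
  exact exp_neg_sub_one_add_monotoneOn (mul_nonneg hu hx.le) (mul_nonneg hv hx.le) (by gcongr)

theorem eval_nonneg (hu : 0 ≤ u) : 0 ≤ Ψ u := by
  simpa using Ψ.eval_monotoneOn self_mem_Ici hu hu

theorem lipschitzOnWith_eval {R : ℝ} (hR : 0 < R) :
    LipschitzOnWith (Ψ.firstDeriv R).toNNReal Ψ (Icc 0 R) := by
  refine LipschitzOnWith.of_le_add_mul _ fun v hv u hu => ?_
  rw [Real.coe_toNNReal _ (Ψ.firstDeriv_nonneg hR.le)]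
  rcases le_or_gt v u with hvu | huv
  · have := Ψ.eval_monotoneOn hv.1 hu.1 hvu
    have := mul_nonneg (Ψ.firstDeriv_nonneg hR.le) (dist_nonneg (x := v) (y := u))
    linarith
  · have hv₀ : 0 < v := hu.1.trans_lt huv
    have slope := Ψ.firstDeriv_monotoneOn hv₀.le hR.le hv.2
    rw [Real.dist_eq, abs_of_pos (sub_pos.2 huv)]
    linarith [Ψ.eval_sub_le hu.1 huv.le hv₀,
      mul_le_mul_of_nonneg_right slope (sub_nonneg.2 huv.le)]

theorem continuousOn_eval : ContinuousOn Ψ (Ici 0) := fun u hu => by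
  have hR : 0 < u + 1 := add_pos_of_nonneg_of_pos hu one_pos
  refine ((Ψ.lipschitzOnWith_eval hR).continuousOn u ⟨hu, (lt_add_one u).le⟩).mono_of_mem_nhdsWithin
    (inter_mem_nhdsWithin _ (Iic_mem_nhds (lt_add_one u)))

end CriticalBranchingMechanism

/-! ### The cumulant flow -/

namespace CriticalBranchingMechanism

variable (Ψ : CriticalBranchingMechanism) {R : ℝ}

/-- The vector field `-Ψ` of the cumulant equation, cut off outside `[0, R]` so that it becomes
bounded and globally Lipschitz. -/
def cumulantField (hR : 0 < R) : ℝ → ℝ :=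
  IccExtend hR.le ((Icc 0 R).domRestrict fun y => -Ψ y)

theorem cumulantField_of_mem (hR : 0 < R) {y : ℝ} (hy : y ∈ Icc 0 R) :
    Ψ.cumulantField hR y = -Ψ y :=
  IccExtend_of_mem hR.le _ hy

theorem lipschitzWith_cumulantField (hR : 0 < R) :
    LipschitzWith (Ψ.firstDeriv R).toNNReal (Ψ.cumulantField hR) := by
  have := (lipschitzOnWith_iff_restrict.1 (Ψ.lipschitzOnWith_eval hR).neg).comp
    (LipschitzWith.projIcc hR.le)
  rwa [mul_one] at this

theorem cumulantField_mem_Icc (hR : 0 < R) (y : ℝ) : Ψ.cumulantField hR y ∈ Icc (-Ψ R) 0 := by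
  have hy := (projIcc 0 R hR.le y).2
  exact ⟨neg_le_neg (Ψ.eval_monotoneOn hy.1 hR.le hy.2), neg_nonpos.2 (Ψ.eval_nonneg hy.1)⟩

theorem isNonnegPowerSeriesOn_eulerStep_increment (hR : 0 < R) {h m : ℝ} (hh : 0 ≤ h)
    (hhR : h * Ψ.firstDeriv R ≤ 1) (hm : m ∈ Icc 0 R) :
    IsNonnegPowerSeriesOn (fun z => eulerStep (Ψ.cumulantField hR) h m
      - eulerStep (Ψ.cumulantField hR) h (m - z)) (Icc 0 m) := by
  rcases hm.1.eq_or_lt with rfl | hm₀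
  · exact (IsNonnegPowerSeriesOn.const le_rfl).congr fun z hz => by
      simp [le_antisymm hz.2 hz.1]
  have linear_coeff : 0 ≤ 1 - h * Ψ.firstDeriv m := sub_nonneg.2 <|
    (mul_le_mul_of_nonneg_left (Ψ.firstDeriv_monotoneOn hm.1 hR.le hm.2) hh).trans hhR
  have remainder : IsNonnegPowerSeriesOn
      (fun z => Ψ (m - z) - Ψ m + z * Ψ.firstDeriv m) (Icc 0 m) :=
    .of_hasSum_pow_add 2 (Ψ.taylorCoeff_nonneg m) fun z hz =>
      Ψ.hasSum_taylorCoeff hm₀ hz.1 hz.2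
  refine (((IsNonnegPowerSeriesOn.const linear_coeff).mul .id).add
    ((IsNonnegPowerSeriesOn.const hh).mul remainder)).congr fun z hz => ?_
  have hmz : m - z ∈ Icc 0 R := ⟨sub_nonneg.2 hz.2, (sub_le_self m hz.1).trans hm.2⟩
  simp only [eulerStep, Ψ.cumulantField_of_mem hR hm, Ψ.cumulantField_of_mem hR hmz, smul_eq_mul]
  ring

/-- The family of solutions `t ↦ u t x` of the cumulant equation `y' = -Ψ(y)` started at the points
`x ∈ [0, R]`, with the absolute monotonicity of its increments from the right end of the interval.
-/
structure IsCumulantFlow (R : ℝ) (u : ℝ → ℝ → ℝ) : Prop where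
  zero : ∀ x ∈ Icc 0 R, u 0 x = x
  mem_Icc : ∀ x ∈ Icc 0 R, ∀ t, 0 ≤ t → u t x ∈ Icc 0 x
  pos : ∀ x ∈ Ioc 0 R, ∀ t, 0 ≤ t → 0 < u t x
  hasDerivAt : ∀ x ∈ Icc 0 R, ∀ t, 0 ≤ t → HasDerivAt (fun t => u t x) (-Ψ (u t x)) t
  isNonnegPowerSeriesOn : ∀ t, 0 ≤ t →
    IsNonnegPowerSeriesOn (fun z => u t R - u t (R - z)) (Icc 0 R)

theorem exists_isCumulantFlow (hR : 0 < R) : ∃ u, Ψ.IsCumulantFlow R u := by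
  have field_lip := Ψ.lipschitzWith_cumulantField hR
  have field_nonpos : ∀ y, Ψ.cumulantField hR y ≤ 0 := fun y => (Ψ.cumulantField_mem_Icc hR y).2
  have field_zero : Ψ.cumulantField hR 0 = 0 := by
    rw [Ψ.cumulantField_of_mem hR ⟨le_rfl, hR.le⟩, Ψ.eval_zero, neg_zero]
  choose φ hφ₀ hφ using exists_isIntegralCurve_of_lipschitzWith_of_bounded field_lip
    (C := (Ψ R).toNNReal) fun y => by
      rw [Real.norm_eq_abs, abs_of_nonpos (field_nonpos y)]
      exact (neg_le.1 (Ψ.cumulantField_mem_Icc hR y).1).trans (Real.le_coe_toNNReal _)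
  have zero_curve : IsIntegralCurve (fun _ => (0 : ℝ)) fun _ => Ψ.cumulantField hR := fun t => by
    simpa only [field_zero] using hasDerivAt_const t (0 : ℝ)
  have mem_Icc : ∀ x ∈ Icc 0 R, ∀ t, 0 ≤ t → φ x t ∈ Icc 0 x := fun x hx t ht => by
    refine ⟨isIntegralCurve_le_of_le field_lip zero_curve (hφ x) ((hφ₀ x).symm ▸ hx.1) ht, ?_⟩
    have anti : Antitone (φ x) := antitone_of_hasDerivAt_nonpos (hφ x) fun t => field_nonpos _
    simpa only [hφ₀] using anti ht
  refine ⟨fun t x => φ x t, fun x _ => hφ₀ x, mem_Icc, fun x hx t ht => ?_, fun x hx t ht => ?_,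
    fun t ht => ?_⟩
  · exact isIntegralCurve_pos field_lip field_zero (hφ x) ((hφ₀ x).symm ▸ hx.1) ht
  · have := mem_Icc x hx t ht
    rw [← Ψ.cumulantField_of_mem hR ⟨this.1, this.2.trans hx.2⟩]
    exact hφ x t
  · refine isNonnegPowerSeriesOn_flow_increment hR field_lip field_zero (fun y _ => field_nonpos y)
      hφ₀ hφ (fun h hh hhR m hm => ?_) ht
    rw [Real.coe_toNNReal _ (Ψ.firstDeriv_nonneg hR.le)] at hhR
    exact Ψ.isNonnegPowerSeriesOn_eulerStep_increment hR hh hhR hm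

end CriticalBranchingMechanism

/-! ### Convolution powers of measures on the half-line -/

section WeightedSum

variable {α : Type*} [MeasurableSpace α] {c : ℕ → ℝ} {ρ : ℕ → Measure α}

/-- The measure `∑ k, c k • ρ k` with real weights, negative weights being truncated to `0`. -/
def weightedSum (c : ℕ → ℝ) (ρ : ℕ → Measure α) : Measure α :=
  Measure.sum fun k => ENNReal.ofReal (c k) • ρ k

theorem ae_weightedSum {p : α → Prop} (h : ∀ k, c k = 0 ∨ ∀ᵐ x ∂ρ k, p x) :
    ∀ᵐ x ∂weightedSum c ρ, p x := by
  refine Measure.ae_sum_iff.2 fun k => ?_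
  rcases h k with hk | hk
  · simp [hk]
  · exact Measure.ae_smul_measure hk _

theorem weightedSum_univ [∀ k, IsFiniteMeasure (ρ k)] (hc : ∀ k, 0 ≤ c k) {a : ℝ}
    (h : HasSum (fun k => c k * (ρ k).real univ) a) :
    weightedSum c ρ univ = ENNReal.ofReal a := by
  rw [weightedSum, Measure.sum_apply _ MeasurableSet.univ, ← h.tsum_eq,
    ENNReal.ofReal_tsum_of_nonneg (fun k => mul_nonneg (hc k) measureReal_nonneg) h.summable]
  congr 1 with k
  rw [Measure.smul_apply, smul_eq_mul, ENNReal.ofReal_mul (hc k), ofReal_measureReal]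

theorem hasSum_integral_weightedSum (hc : ∀ k, 0 ≤ c k) {f : α → ℝ}
    (hf : Integrable f (weightedSum c ρ)) :
    HasSum (fun k => c k * ∫ x, f x ∂ρ k) (∫ x, f x ∂weightedSum c ρ) := by
  have := hasSum_integral_measure hf
  simp only [integral_smul_measure, ENNReal.toReal_ofReal (hc _), smul_eq_mul] at this
  exact this

end WeightedSum

section

variable {μ ρ : Measure ℝ} {f : ℝ → ℝ} {M : ℝ}

theorem restrict_Ioi_eq_self (hμ : ∀ᵐ x ∂μ, 0 < x) : μ.restrict (Ioi 0) = μ :=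
  Measure.restrict_eq_self_of_ae_mem hμ

theorem measureReal_Ioi_eq_univ (hμ : ∀ᵐ x ∂μ, 0 < x) : μ.real (Ioi 0) = μ.real univ := by
  rw [← measureReal_restrict_apply_univ, restrict_Ioi_eq_self hμ]

theorem ae_pos_of_Iic_eq_zero (hμ : μ (Iic 0) = 0) : ∀ᵐ x ∂μ, 0 < x :=
  (measure_eq_zero_iff_ae_notMem.1 hμ).mono fun _ hx => not_le.1 hx

theorem aestronglyMeasurable_of_ae_pos (hμ : ∀ᵐ x ∂μ, 0 < x) (hf : ContinuousOn f (Ioi 0)) :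
    AEStronglyMeasurable f μ := by
  simpa only [restrict_Ioi_eq_self hμ] using
    hf.aestronglyMeasurable (μ := μ) measurableSet_Ioi

theorem integrable_of_ae_pos [IsFiniteMeasure μ] (hμ : ∀ᵐ x ∂μ, 0 < x)
    (hf : ContinuousOn f (Ioi 0)) (hM : ∀ x ∈ Ioi 0, |f x| ≤ M) : Integrable f μ :=
  .of_bound (aestronglyMeasurable_of_ae_pos hμ hf) M (hμ.mono hM)

theorem abs_integral_le_of_ae_pos [IsFiniteMeasure μ] (hμ : ∀ᵐ x ∂μ, 0 < x)
    (hM : ∀ x ∈ Ioi 0, |f x| ≤ M) : |∫ x, f x ∂μ| ≤ M * μ.real univ :=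
  norm_integral_le_of_norm_le_const (f := f) (hμ.mono fun x hx => hM x hx)

theorem abs_integral_sub_integral_le_of_le [IsFiniteMeasure μ] (hμ : ∀ᵐ x ∂μ, 0 < x) (hρ : ρ ≤ μ)
    (hf : ContinuousOn f (Ioi 0)) (hM : ∀ x ∈ Ioi 0, |f x| ≤ M) :
    |∫ x, f x ∂μ - ∫ x, f x ∂ρ| ≤ M * (μ.real univ - ρ.real univ) := by
  have : IsFiniteMeasure ρ := isFiniteMeasure_of_le μ hρ
  have decomp : μ = (μ - ρ) + ρ := (Measure.sub_add_cancel_of_le hρ).symm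
  have hint := integrable_of_ae_pos hμ hf hM
  have hsub := Measure.sub_le (μ := μ) (ν := ρ)
  have integral_decomp : ∫ x, f x ∂μ = ∫ x, f x ∂(μ - ρ) + ∫ x, f x ∂ρ := by
    conv_lhs => rw [decomp]
    exact integral_add_measure (hint.mono_measure hsub) (hint.mono_measure hρ)
  have mass_decomp : μ.real univ = (μ - ρ).real univ + ρ.real univ := by
    conv_lhs => rw [decomp]
    exact measureReal_add_apply
  rw [integral_decomp, mass_decomp, add_sub_cancel_right, add_sub_cancel_right]
  exact abs_integral_le_of_ae_pos (ae_mono hsub hμ) hM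

/-- The `k`-fold convolution power of `μ`, as the law of `x₁ + ⋯ + x_k` under `μ^⊗k`. -/
def convPow (μ : Measure ℝ) (k : ℕ) : Measure ℝ :=
  (Measure.pi fun _ : Fin k => μ).map fun x => ∑ i, x i

theorem measurable_sum_apply (k : ℕ) : Measurable fun x : Fin k → ℝ => ∑ i, x i := by fun_prop

theorem convPow_one : convPow μ 1 = μ := by
  refine Eq.trans ?_ (measurePreserving_funUnique μ (Fin 1)).map_eq
  rw [convPow]
  congr 1
  ext x
  simp

variable [IsFiniteMeasure μ]

instance isFiniteMeasure_convPow (k : ℕ) : IsFiniteMeasure (convPow μ k) :=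
  Measure.isFiniteMeasure_map _ _

theorem convPow_real_univ (k : ℕ) : (convPow μ k).real univ = μ.real univ ^ k := by
  rw [convPow, map_measureReal_apply (measurable_sum_apply k) MeasurableSet.univ]
  simp [Measure.real, Measure.pi_univ]

theorem ae_pos_pi (hμ : ∀ᵐ x ∂μ, 0 < x) (k : ℕ) :
    ∀ᵐ x ∂Measure.pi fun _ : Fin k => μ, ∀ i, 0 < x i :=
  ae_all_iff.2 fun i =>
    (Measure.quasiMeasurePreserving_eval (μ := fun _ : Fin k => μ) i).ae hμ

theorem ae_pos_convPow (hμ : ∀ᵐ x ∂μ, 0 < x) (k : ℕ) : ∀ᵐ x ∂convPow μ (k + 1), 0 < x := by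
  refine (ae_map_iff (measurable_sum_apply _).aemeasurable measurableSet_Ioi).2 ?_
  filter_upwards [ae_pos_pi hμ (k + 1)] with x hx
  exact Finset.sum_pos (fun i _ => hx i) Finset.univ_nonempty

theorem integral_exp_neg_mul_convPow (q : ℝ) (k : ℕ) :
    ∫ x, exp (-(q * x)) ∂convPow μ k = (∫ x, exp (-(q * x)) ∂μ) ^ k := by
  rw [convPow, integral_map (measurable_sum_apply k).aemeasurable (by fun_prop)]
  have := integral_fintype_prod_eq_pow (ι := Fin k) (μ := μ) fun x => exp (-(q * x))
  simpa only [← Real.exp_sum, Finset.sum_neg_distrib, ← Finset.mul_sum, Fintype.card_fin] using this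

theorem pi_map_eval_succ (k : ℕ) (i : Fin (k + 1)) :
    (Measure.pi fun _ : Fin (k + 1) => μ).map (Function.eval i) = μ univ ^ k • μ := by
  simp [Measure.pi_map_eval, Finset.card_erase_of_mem]

theorem integrable_comp_eval (hf : Integrable f μ) (k : ℕ) (i : Fin (k + 1)) :
    Integrable (fun x => f (x i)) (Measure.pi fun _ : Fin (k + 1) => μ) := by
  refine Integrable.comp_measurable (f := Function.eval i) ?_ (measurable_pi_apply i)
  rw [pi_map_eval_succ]
  exact hf.smul_measure (ENNReal.pow_ne_top (measure_ne_top μ univ))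

theorem integral_comp_eval (hf : Integrable f μ) (k : ℕ) (i : Fin (k + 1)) :
    ∫ x, f (x i) ∂Measure.pi (fun _ : Fin (k + 1) => μ) = μ.real univ ^ k * ∫ x, f x ∂μ := by
  have hmeas : AEStronglyMeasurable f
      ((Measure.pi fun _ : Fin (k + 1) => μ).map (Function.eval i)) := by
    rw [pi_map_eval_succ]
    exact hf.aestronglyMeasurable.smul_measure _
  have := integral_map (μ := Measure.pi fun _ : Fin (k + 1) => μ) (φ := Function.eval i)
    (measurable_pi_apply i).aemeasurable hmeas
  rw [pi_map_eval_succ, integral_smul_measure, ENNReal.toReal_pow] at this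
  exact this.symm

theorem pow_mul_Ik_succ (hμ : ∀ᵐ x ∂μ, 0 < x) (hm : 0 < μ.real univ) (hf : ContinuousOn f (Ioi 0))
    (hM : ∀ x ∈ Ioi 0, |f x| ≤ M) (k : ℕ) : μ.real univ ^ (k + 1) * Ik (k + 1) μ f =
      ∫ x, f x ∂convPow μ (k + 1) - (k + 1) * (μ.real univ ^ k * ∫ x, f x ∂μ) := by
  have hint := integrable_of_ae_pos hμ hf hM
  have hint_conv := integrable_of_ae_pos (ae_pos_convPow hμ k) hf hM
  have hmeas := (measurable_sum_apply (k + 1)).aemeasurable (μ := Measure.pi fun _ => μ)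
  have hint_sum : Integrable (fun x : Fin (k + 1) → ℝ => f (∑ i, x i)) (Measure.pi fun _ => μ) :=
    hint_conv.comp_aemeasurable hmeas
  have hint_eval := fun i (_ : i ∈ Finset.univ) => integrable_comp_eval hint k i
  rw [Ik, restrict_Ioi_eq_self hμ, ← measureReal_def, measureReal_Ioi_eq_univ hμ,
    mul_div_cancel₀ _ (pow_pos hm _).ne', integral_sub hint_sum (integrable_finsetSum _ hint_eval),
    integral_finsetSum _ hint_eval, convPow, integral_map hmeas hint_conv.aestronglyMeasurable]
  simp only [integral_comp_eval hint, Finset.sum_const, Finset.card_univ, Fintype.card_fin,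
    nsmul_eq_mul]
  push_cast
  rfl

end

/-! ### The coagulation operator -/

/-- The Laplace transform of `μ`. -/
def laplace (μ : Measure ℝ) (q : ℝ) : ℝ := ∫ x, exp (-(q * x)) ∂μ

theorem laplace_zero (μ : Measure ℝ) : laplace μ 0 = μ.real univ := by simp [laplace]

theorem continuousOn_exp_neg_mul (q : ℝ) (s : Set ℝ) :
    ContinuousOn (fun x => exp (-(q * x))) s := by
  fun_prop

theorem abs_exp_neg_mul_le_one {q : ℝ} (hq : 0 ≤ q) : ∀ x ∈ Ioi (0 : ℝ), |exp (-(q * x))| ≤ 1 :=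
  fun x hx => by
  rw [abs_exp]
  exact exp_neg_le_one (mul_nonneg hq (le_of_lt hx))

section

variable {μ : Measure ℝ} [IsFiniteMeasure μ] {f g : ℝ → ℝ} {M N q : ℝ}

theorem laplace_mem_Icc (hμ : ∀ᵐ x ∂μ, 0 < x) (hq : 0 ≤ q) : laplace μ q ∈ Icc 0 (μ.real univ) := by
  refine ⟨integral_nonneg fun x => (exp_pos _).le, (le_abs_self _).trans ?_⟩
  exact (abs_integral_le_of_ae_pos hμ (abs_exp_neg_mul_le_one hq)).trans_eq (one_mul _)

namespace CriticalBranchingMechanism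

variable (Ψ : CriticalBranchingMechanism)

/-- The rate at which mass is created by coagulation: `k + 2` particles of the population `μ` merge
at a rate given by the corresponding Taylor coefficient of `Ψ` at the total mass. -/
def gainMeasure (μ : Measure ℝ) : Measure ℝ :=
  weightedSum (Ψ.taylorCoeff (μ.real univ)) fun k => convPow μ (k + 2)

theorem gainMeasure_univ (hm : 0 < μ.real univ) : Ψ.gainMeasure μ univ =
    ENNReal.ofReal (μ.real univ * Ψ.firstDeriv (μ.real univ) - Ψ (μ.real univ)) := by
  have := Ψ.hasSum_taylorCoeff hm hm.le le_rfl
  rw [sub_self, eval_zero, zero_sub, neg_add_eq_sub] at this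
  exact weightedSum_univ (Ψ.taylorCoeff_nonneg _) (by simpa only [convPow_real_univ] using this)

theorem isFiniteMeasure_gainMeasure (hm : 0 < μ.real univ) : IsFiniteMeasure (Ψ.gainMeasure μ) :=
  ⟨by rw [Ψ.gainMeasure_univ hm]; exact ENNReal.ofReal_lt_top⟩

theorem gainMeasure_real_univ_le (hm : 0 < μ.real univ) :
    (Ψ.gainMeasure μ).real univ ≤ μ.real univ * Ψ.firstDeriv (μ.real univ) := by
  rw [measureReal_def, Ψ.gainMeasure_univ hm]
  refine ENNReal.toReal_le_of_le_ofReal (mul_nonneg hm.le (Ψ.firstDeriv_nonneg hm.le))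
    (ENNReal.ofReal_le_ofReal (sub_le_self _ (Ψ.eval_nonneg hm.le)))

theorem ae_pos_gainMeasure (hμ : ∀ᵐ x ∂μ, 0 < x) : ∀ᵐ x ∂Ψ.gainMeasure μ, 0 < x :=
  ae_weightedSum fun k => .inr (ae_pos_convPow hμ (k + 1))

theorem hasSum_integral_gainMeasure (hμ : ∀ᵐ x ∂μ, 0 < x) (hm : 0 < μ.real univ)
    (hf : ContinuousOn f (Ioi 0)) (hM : ∀ x ∈ Ioi 0, |f x| ≤ M) :
    HasSum (fun k => Ψ.taylorCoeff (μ.real univ) k * ∫ x, f x ∂convPow μ (k + 2))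
      (∫ x, f x ∂Ψ.gainMeasure μ) := by
  have := Ψ.isFiniteMeasure_gainMeasure hm
  have hint := integrable_of_ae_pos (Ψ.ae_pos_gainMeasure hμ) hf hM
  exact hasSum_integral_weightedSum (Ψ.taylorCoeff_nonneg _) hint

theorem laplace_gainMeasure (hμ : ∀ᵐ x ∂μ, 0 < x) (hm : 0 < μ.real univ) (hq : 0 ≤ q) :
    laplace (Ψ.gainMeasure μ) q = Ψ (μ.real univ - laplace μ q) - Ψ (μ.real univ)
      + laplace μ q * Ψ.firstDeriv (μ.real univ) := by
  have hsum := Ψ.hasSum_integral_gainMeasure hμ hm (continuousOn_exp_neg_mul q _)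
    (abs_exp_neg_mul_le_one hq)
  simp only [integral_exp_neg_mul_convPow] at hsum
  obtain ⟨laplace_nonneg, laplace_le⟩ := laplace_mem_Icc hμ hq
  exact hsum.unique (Ψ.hasSum_taylorCoeff hm laplace_nonneg laplace_le)

theorem Lform_eq (hμ : ∀ᵐ x ∂μ, 0 < x) (hm : 0 < μ.real univ) (hf : ContinuousOn f (Ioi 0))
    (hM : ∀ x ∈ Ioi 0, |f x| ≤ M) : Lform Ψ μ f =
      ∫ x, f x ∂Ψ.gainMeasure μ - Ψ.firstDeriv (μ.real univ) * ∫ x, f x ∂μ := by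
  have gain := Ψ.hasSum_integral_gainMeasure hμ hm hf hM
  have loss := (Ψ.hasSum_taylorCoeff_firstDeriv hm).mul_right (∫ x, f x ∂μ)
  rw [Lform, ← measureReal_def, measureReal_Ioi_eq_univ hμ, ← (gain.sub loss).tsum_eq]
  congr 1 with k
  have rate : (-μ.real univ) ^ (k + 2) * iteratedDeriv (k + 2) Ψ (μ.real univ) / (k + 2).factorial =
      Ψ.taylorCoeff (μ.real univ) k * μ.real univ ^ (k + 2) := by
    rw [Ψ.taylorCoeff_eq_iteratedDeriv hm, neg_pow]
    ring
  rw [rate, mul_assoc, pow_mul_Ik_succ hμ hm hf hM]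
  push_cast
  ring

theorem Lform_sub (hμ : ∀ᵐ x ∂μ, 0 < x) (hm : 0 < μ.real univ) (hf : ContinuousOn f (Ioi 0))
    (hM : ∀ x ∈ Ioi 0, |f x| ≤ M) (hg : ContinuousOn g (Ioi 0)) (hN : ∀ x ∈ Ioi 0, |g x| ≤ N) :
    Lform Ψ μ (f - g) = Lform Ψ μ f - Lform Ψ μ g := by
  have := Ψ.isFiniteMeasure_gainMeasure hm
  have hgain := Ψ.ae_pos_gainMeasure hμ
  rw [Ψ.Lform_eq hμ hm hf hM, Ψ.Lform_eq hμ hm hg hN, Ψ.Lform_eq (M := M + N) hμ hm (hf.sub hg)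
    fun x hx => (abs_sub _ _).trans (add_le_add (hM x hx) (hN x hx)),
    integral_sub' (integrable_of_ae_pos hμ hf hM) (integrable_of_ae_pos hμ hg hN),
    integral_sub' (integrable_of_ae_pos hgain hf hM) (integrable_of_ae_pos hgain hg hN)]
  ring

theorem abs_Lform_le (hμ : ∀ᵐ x ∂μ, 0 < x) (hm : 0 < μ.real univ) (hf : ContinuousOn f (Ioi 0))
    (hM : ∀ x ∈ Ioi 0, |f x| ≤ M) :
    |Lform Ψ μ f| ≤ 2 * M * (μ.real univ * Ψ.firstDeriv (μ.real univ)) := by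
  have := Ψ.isFiniteMeasure_gainMeasure hm
  have gain : |∫ x, f x ∂Ψ.gainMeasure μ| ≤ M * (μ.real univ * Ψ.firstDeriv (μ.real univ)) :=
    (abs_integral_le_of_ae_pos (Ψ.ae_pos_gainMeasure hμ) hM).trans
      (mul_le_mul_of_nonneg_left (Ψ.gainMeasure_real_univ_le hm)
        ((abs_nonneg _).trans (hM 1 (mem_Ioi.2 one_pos))))
  have loss : |Ψ.firstDeriv (μ.real univ) * ∫ x, f x ∂μ| ≤
      Ψ.firstDeriv (μ.real univ) * (M * μ.real univ) := by
    rw [abs_mul, abs_of_nonneg (Ψ.firstDeriv_nonneg hm.le)]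
    exact mul_le_mul_of_nonneg_left (abs_integral_le_of_ae_pos hμ hM) (Ψ.firstDeriv_nonneg hm.le)
  rw [Ψ.Lform_eq hμ hm hf hM]
  linarith [abs_sub (∫ x, f x ∂Ψ.gainMeasure μ) (Ψ.firstDeriv (μ.real univ) * ∫ x, f x ∂μ)]

theorem abs_Lform_sub_le (hμ : ∀ᵐ x ∂μ, 0 < x) (hm : 0 < μ.real univ)
    (hf : ContinuousOn f (Ioi 0)) (hM : ∀ x ∈ Ioi 0, |f x| ≤ M) (hg : ContinuousOn g (Ioi 0))
    (hN : ∀ x ∈ Ioi 0, |g x| ≤ N) {ε : ℝ} (hfg : ∀ x ∈ Ioi 0, |f x - g x| ≤ ε) :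
    |Lform Ψ μ f - Lform Ψ μ g| ≤ 2 * ε * (μ.real univ * Ψ.firstDeriv (μ.real univ)) := by
  rw [← Ψ.Lform_sub hμ hm hf hM hg hN]
  exact Ψ.abs_Lform_le hμ hm (hf.sub hg) hfg

theorem Lform_exp_neg_mul (hμ : ∀ᵐ x ∂μ, 0 < x) (hm : 0 < μ.real univ) (hq : 0 ≤ q) :
    Lform Ψ μ (fun x => exp (-(q * x))) = Ψ (μ.real univ - laplace μ q) - Ψ (μ.real univ) := by
  rw [Ψ.Lform_eq hμ hm (continuousOn_exp_neg_mul q _) (abs_exp_neg_mul_le_one hq), ← laplace,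
    ← laplace, Ψ.laplace_gainMeasure hμ hm hq]
  ring

end CriticalBranchingMechanism

end

theorem Lform_congr {Φ Ψ : ℝ → ℝ} (h : EqOn Φ Ψ (Ioi 0)) {ν : Measure ℝ}
    (hm : 0 < ν.real (Ioi 0)) (f : ℝ → ℝ) : Lform Φ ν f = Lform Ψ ν f := by
  have := h.eventuallyEq_of_mem (Ioi_mem_nhds hm)
  simp only [Lform, ← measureReal_def, this.iteratedDeriv_eq]

theorem IsWeakSolutionWithData.congr {Φ Ψ : ℝ → ℝ} (h : EqOn Φ Ψ (Ioi 0)) {ν₀ : Measure ℝ}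
    {ν : ℝ → Measure ℝ} (hν : IsWeakSolutionWithData Φ ν₀ ν) : IsWeakSolutionWithData Ψ ν₀ ν := by
  obtain ⟨hfin, hmeas, hsol, hlim⟩ := hν
  refine ⟨hfin, hmeas, fun f hf s t hs ht => ?_, hlim⟩
  rw [hsol f hf s t hs ht]
  congr 1
  refine intervalIntegral.integral_congr fun τ hτ => Lform_congr h ?_ f
  obtain ⟨_, hmass, -⟩ := hfin τ ((lt_min hs ht).trans_le hτ.1)
  exact ENNReal.toReal_pos hmass (measure_ne_top _ _)

/-! ### Test functions and polynomials in `exp (-x)` -/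

theorem eval_exp_neg_eq_sum (p : ℝ[X]) (x : ℝ) :
    p.eval (exp (-x)) = ∑ j ∈ p.support, p.coeff j * exp (-(j * x)) := by
  rw [Polynomial.eval_eq_sum, Polynomial.sum]
  refine Finset.sum_congr rfl fun j _ => ?_
  rw [← Real.exp_nat_mul, mul_neg]

theorem integral_eval_exp_neg {μ : Measure ℝ} [IsFiniteMeasure μ] (hμ : ∀ᵐ x ∂μ, 0 < x)
    (p : ℝ[X]) : ∫ x, p.eval (exp (-x)) ∂μ = ∑ j ∈ p.support, p.coeff j * laplace μ j := by
  simp only [eval_exp_neg_eq_sum, laplace, ← integral_const_mul]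
  exact integral_finsetSum _ fun j _ => (integrable_of_ae_pos hμ (continuousOn_exp_neg_mul j _)
    (abs_exp_neg_mul_le_one j.cast_nonneg)).const_mul _

theorem isTestFun_comp_exp_neg {g : ℝ → ℝ} (hg : Continuous g) :
    IsTestFun fun x => g (exp (-x)) := by
  have hcont : Continuous fun x => g (exp (-x)) := by fun_prop
  obtain ⟨M, hM⟩ := isCompact_Icc.exists_bound_of_continuousOn (s := Icc 0 1) hg.continuousOn
  refine ⟨hcont.continuousOn, ⟨M, fun x hx => hM _ ⟨(exp_pos _).le, exp_neg_le_one (le_of_lt hx)⟩⟩,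
    ⟨_, (hcont.tendsto 0).mono_left nhdsWithin_le_nhds⟩,
    ⟨g 0, (hg.tendsto 0).comp tendsto_exp_neg_atTop_nhds_zero⟩⟩

theorem isTestFun_eval_exp_neg (p : ℝ[X]) : IsTestFun fun x => p.eval (exp (-x)) :=
  isTestFun_comp_exp_neg p.continuous

theorem isTestFun_exp_neg_natCast_mul (j : ℕ) : IsTestFun fun x => exp (-(j * x)) := by
  simpa only [← Real.exp_nat_mul, mul_neg] using isTestFun_comp_exp_neg (continuous_pow j)

namespace IsTestFun

variable {f : ℝ → ℝ}

theorem continuousOn (hf : IsTestFun f) : ContinuousOn f (Ioi 0) := hf.1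

theorem exists_abs_le (hf : IsTestFun f) : ∃ M, ∀ x ∈ Ioi (0 : ℝ), |f x| ≤ M := hf.2.1

/- In the variable `y = exp (-x)`, a test function extends continuously to the compact interval
`[0, 1]`, where Weierstrass' theorem applies. -/
theorem exists_polynomial_near (hf : IsTestFun f) {ε : ℝ} (hε : 0 < ε) :
    ∃ p : ℝ[X], ∀ x ∈ Ioi 0, |f x - p.eval (exp (-x))| < ε := by
  obtain ⟨hcont, -, ⟨l₀, hzero⟩, ⟨linf, hinf⟩⟩ := hf
  have neg_log_pos : MapsTo (fun y => -log y) (Ioo 0 1) (Ioi 0) := fun y hy =>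
    neg_pos.2 (log_neg hy.1 hy.2)
  have hcont' : ContinuousOn (fun y => f (-log y)) (Ioo 0 1) :=
    hcont.comp (continuousOn_log.mono fun y hy => hy.1.ne').neg neg_log_pos
  have lim_zero : Tendsto (fun y => f (-log y)) (𝓝[>] 0) (𝓝 linf) :=
    hinf.comp (tendsto_neg_atBot_atTop.comp tendsto_log_nhdsGT_zero)
  have lim_one : Tendsto (fun y => f (-log y)) (𝓝[<] 1) (𝓝 l₀) := by
    refine hzero.comp (tendsto_nhdsWithin_iff.2 ⟨?_, ?_⟩)
    · have : Tendsto (fun y => -log y) (𝓝 1) (𝓝 (-log 1)) := (continuousAt_log one_ne_zero).neg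
      rw [log_one, neg_zero] at this
      exact this.mono_left nhdsWithin_le_nhds
    · filter_upwards [Ioo_mem_nhdsLT one_pos] with y hy using neg_log_pos hy
  obtain ⟨p, hp⟩ := exists_polynomial_near_of_continuousOn 0 1 _
    (continuousOn_Icc_extendFrom_Ioo hcont' lim_zero lim_one) ε hε
  refine ⟨p, fun x hx => ?_⟩
  have hy : exp (-x) ∈ Ioo (0 : ℝ) 1 := ⟨exp_pos _, exp_lt_one_iff.2 (neg_lt_zero.2 hx)⟩
  have extend_eq : extendFrom (Ioo 0 1) (fun y => f (-log y)) (exp (-x)) = f x := by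
    refine extendFrom_eq (subset_closure hy) ?_
    simpa only [log_exp, neg_neg] using (hcont' _ hy).tendsto
  rw [abs_sub_comm, ← extend_eq]
  exact hp _ (Ioo_subset_Icc_self hy)

theorem exists_tendstoUniformlyOn_eval_exp_neg (hf : IsTestFun f) : ∃ p : ℕ → ℝ[X],
    TendstoUniformlyOn (fun n x => (p n).eval (exp (-x))) f atTop (Ioi 0) := by
  choose p hp using fun n : ℕ =>
    hf.exists_polynomial_near (Nat.one_div_pos_of_nat (α := ℝ) (n := n))
  refine ⟨p, Metric.tendstoUniformlyOn_iff.2 fun ε hε => ?_⟩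
  filter_upwards [tendsto_one_div_add_atTop_nhds_zero_nat.eventually_lt_const hε] with n hn x hx
  exact (hp n x hx).trans hn

variable {ι : Type*} {l : Filter ι} {F : ι → ℝ → ℝ}

theorem tendsto_integral {μ : Measure ℝ} [IsFiniteMeasure μ] (hμ : ∀ᵐ x ∂μ, 0 < x)
    (hF : ∀ n, IsTestFun (F n)) (hf : IsTestFun f) (h : TendstoUniformlyOn F f l (Ioi 0)) :
    Tendsto (fun n => ∫ x, F n x ∂μ) l (𝓝 (∫ x, f x ∂μ)) := by
  have hint : ∀ {g}, IsTestFun g → Integrable g μ := fun hg =>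
    let ⟨_, hM⟩ := hg.exists_abs_le
    integrable_of_ae_pos hμ hg.continuousOn hM
  have mass_pos : 0 < μ.real univ + 1 := by positivity
  refine Metric.tendsto_nhds.2 fun ε hε => ?_
  filter_upwards [Metric.tendstoUniformlyOn_iff.1 h _ (div_pos hε mass_pos)] with n hn
  rw [dist_comm, Real.dist_eq, ← integral_sub (hint hf) (hint (hF n))]
  calc |∫ x, f x - F n x ∂μ| ≤ ε / (μ.real univ + 1) * μ.real univ :=
        abs_integral_le_of_ae_pos hμ fun x hx => (hn x hx).le
    _ < ε := by
      rw [div_mul_eq_mul_div, div_lt_iff₀ mass_pos]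
      linarith

theorem tendstoUniformlyOn_Lform (Ψ : CriticalBranchingMechanism) {T : Type*} {s : Set T}
    {ν : T → Measure ℝ} {R : ℝ} (hν_fin : ∀ t ∈ s, IsFiniteMeasure (ν t))
    (hν : ∀ t ∈ s, ∀ᵐ x ∂ν t, 0 < x)
    (hmass : ∀ t ∈ s, (ν t).real univ ∈ Ioc 0 R) (hF : ∀ n, IsTestFun (F n)) (hf : IsTestFun f)
    (h : TendstoUniformlyOn F f l (Ioi 0)) :
    TendstoUniformlyOn (fun n t => Lform Ψ (ν t) (F n)) (fun t => Lform Ψ (ν t) f) l s := by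
  rcases s.eq_empty_or_nonempty with rfl | ⟨t₀, ht₀⟩
  · exact tendstoUniformlyOn_empty
  have hR : 0 ≤ R := (hmass t₀ ht₀).1.le.trans (hmass t₀ ht₀).2
  set C := R * Ψ.firstDeriv R
  have hC : 0 ≤ C := mul_nonneg hR (Ψ.firstDeriv_nonneg hR)
  refine Metric.tendstoUniformlyOn_iff.2 fun ε hε => ?_
  have hδ : 0 < ε / (2 * C + 1) := by positivity
  filter_upwards [Metric.tendstoUniformlyOn_iff.1 h _ hδ] with n hn t ht
  have := hν_fin t ht
  obtain ⟨M, hM⟩ := hf.exists_abs_le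
  obtain ⟨N, hN⟩ := (hF n).exists_abs_le
  obtain ⟨mass_pos, mass_le⟩ := hmass t ht
  have rate_le : (ν t).real univ * Ψ.firstDeriv ((ν t).real univ) ≤ C :=
    mul_le_mul mass_le (Ψ.firstDeriv_monotoneOn mass_pos.le hR mass_le)
      (Ψ.firstDeriv_nonneg mass_pos.le) hR
  calc |Lform Ψ (ν t) f - Lform Ψ (ν t) (F n)|
      ≤ 2 * (ε / (2 * C + 1)) * ((ν t).real univ * Ψ.firstDeriv ((ν t).real univ)) :=
        Ψ.abs_Lform_sub_le (hν t ht) mass_pos hf.continuousOn hM (hF n).continuousOn hN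
          fun x hx => (hn x hx).le
    _ ≤ 2 * (ε / (2 * C + 1)) * C := by gcongr
    _ < ε := by
      rw [mul_div_assoc', div_mul_eq_mul_div, div_lt_iff₀ (by positivity)]
      linarith

end IsTestFun

theorem CriticalBranchingMechanism.Lform_eval_exp_neg (Ψ : CriticalBranchingMechanism)
    {μ : Measure ℝ} [IsFiniteMeasure μ] (hμ : ∀ᵐ x ∂μ, 0 < x) (hm : 0 < μ.real univ) (p : ℝ[X]) :
    Lform Ψ μ (fun x => p.eval (exp (-x))) =
      ∑ j ∈ p.support, p.coeff j * (Ψ (μ.real univ - laplace μ j) - Ψ (μ.real univ)) := by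
  have := Ψ.isFiniteMeasure_gainMeasure hm
  obtain ⟨M, hM⟩ := (isTestFun_eval_exp_neg p).exists_abs_le
  rw [Ψ.Lform_eq hμ hm (isTestFun_eval_exp_neg p).continuousOn hM, integral_eval_exp_neg hμ,
    integral_eval_exp_neg (Ψ.ae_pos_gainMeasure hμ), Finset.mul_sum, ← Finset.sum_sub_distrib]
  refine Finset.sum_congr rfl fun j _ => ?_
  rw [Ψ.laplace_gainMeasure hμ hm j.cast_nonneg]
  ring

theorem ext_of_laplace_natCast {μ ρ : Measure ℝ} [IsFiniteMeasure μ] [IsFiniteMeasure ρ]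
    (hμ : ∀ᵐ x ∂μ, 0 < x) (hρ : ∀ᵐ x ∂ρ, 0 < x) (h : ∀ j : ℕ, laplace μ j = laplace ρ j) :
    μ = ρ := by
  have integral_eq : ∀ f, IsTestFun f → ∫ x, f x ∂μ = ∫ x, f x ∂ρ := fun f hf => by
    obtain ⟨p, hp⟩ := hf.exists_tendstoUniformlyOn_eval_exp_neg
    have hpμ := IsTestFun.tendsto_integral hμ (fun n => isTestFun_eval_exp_neg (p n)) hf hp
    have hpρ := IsTestFun.tendsto_integral hρ (fun n => isTestFun_eval_exp_neg (p n)) hf hp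
    simp only [integral_eval_exp_neg hμ, h] at hpμ
    simp only [integral_eval_exp_neg hρ] at hpρ
    exact tendsto_nhds_unique hpμ hpρ
  have hemb : MeasurableEmbedding fun x : ℝ => exp (-x) :=
    Measurable.measurableEmbedding (by fun_prop) (exp_injective.comp neg_injective)
  refine hemb.map_injective ?_
  refine ext_of_forall_integral_eq_of_IsFiniteMeasure fun g => ?_
  rw [hemb.integral_map, hemb.integral_map]
  exact integral_eq _ (isTestFun_comp_exp_neg g.continuous)

/-! ### Existence -/

section HasDerivAtLaplace

variable (Ψ : CriticalBranchingMechanism) {ν : ℝ → Measure ℝ} {R : ℝ} {f : ℝ → ℝ}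
  (hν_fin : ∀ t, 0 < t → IsFiniteMeasure (ν t)) (hν : ∀ t, 0 < t → ∀ᵐ x ∂ν t, 0 < x)
  (hmass : ∀ t, 0 < t → (ν t).real univ ∈ Ioc 0 R)
  (hderiv : ∀ j : ℕ, ∀ t, 0 < t → HasDerivAt (fun t => laplace (ν t) j)
    (Ψ ((ν t).real univ - laplace (ν t) j) - Ψ ((ν t).real univ)) t)

include hν_fin hν hmass hderiv

theorem hasDerivAt_integral_of_hasDerivAt_laplace (hf : IsTestFun f) {t : ℝ} (ht : 0 < t) :
    HasDerivAt (fun t => ∫ x, f x ∂ν t) (Lform Ψ (ν t) f) t := by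
  obtain ⟨p, hp⟩ := hf.exists_tendstoUniformlyOn_eval_exp_neg
  have hp_test := fun n => isTestFun_eval_exp_neg (p n)
  have hderiv_poly : ∀ n, ∀ t ∈ Ioi (0 : ℝ), HasDerivAt (fun t => ∫ x, (p n).eval (exp (-x)) ∂ν t)
      (Lform Ψ (ν t) fun x => (p n).eval (exp (-x))) t := fun n t ht => by
    have := hν_fin t ht
    rw [Ψ.Lform_eval_exp_neg (hν t ht) (hmass t ht).1]
    have hderiv_sum := HasDerivAt.fun_sum fun j (_ : j ∈ (p n).support) =>
      (hderiv j t ht).const_mul ((p n).coeff j)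
    refine hderiv_sum.congr_of_eventuallyEq ?_
    filter_upwards [Ioi_mem_nhds ht] with s hs
    have := hν_fin s hs
    exact integral_eval_exp_neg (hν s hs) (p n)
  refine hasDerivAt_of_tendstoUniformlyOn isOpen_Ioi
    (IsTestFun.tendstoUniformlyOn_Lform Ψ hν_fin hν hmass hp_test hf hp)
    (Eventually.of_forall hderiv_poly) (fun t ht => ?_) ht
  have := hν_fin t ht
  exact IsTestFun.tendsto_integral (hν t ht) hp_test hf hp

theorem continuousOn_Lform_of_hasDerivAt_laplace (hf : IsTestFun f) :
    ContinuousOn (fun t => Lform Ψ (ν t) f) (Ioi 0) := by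
  obtain ⟨p, hp⟩ := hf.exists_tendstoUniformlyOn_eval_exp_neg
  refine (IsTestFun.tendstoUniformlyOn_Lform Ψ hν_fin hν hmass
    (fun n => isTestFun_eval_exp_neg (p n)) hf hp).continuousOn (Frequently.of_forall fun n => ?_)
  have laplace_cont : ∀ j : ℕ, ContinuousOn (fun t => laplace (ν t) j) (Ioi 0) := fun j t ht =>
    (hderiv j t ht).continuousAt.continuousWithinAt
  have mass_cont : ContinuousOn (fun t => (ν t).real univ) (Ioi 0) := by
    simpa only [Nat.cast_zero, laplace_zero] using laplace_cont 0
  have laplace_le : ∀ j : ℕ, ∀ t ∈ Ioi (0 : ℝ), laplace (ν t) j ≤ (ν t).real univ :=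
      fun j t ht => by
    have := hν_fin t ht
    exact (laplace_mem_Icc (hν t ht) j.cast_nonneg).2
  have poly_cont : ContinuousOn (fun t => ∑ j ∈ (p n).support, (p n).coeff j *
      (Ψ ((ν t).real univ - laplace (ν t) j) - Ψ ((ν t).real univ))) (Ioi 0) :=
    continuousOn_finsetSum _ fun j _ => continuousOn_const.mul <|
      (Ψ.continuousOn_eval.comp (mass_cont.sub (laplace_cont j)) fun t ht =>
        sub_nonneg.2 (laplace_le j t ht)).sub
      (Ψ.continuousOn_eval.comp mass_cont fun t _ => measureReal_nonneg)
  refine poly_cont.congr fun t ht => ?_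
  have := hν_fin t ht
  exact Ψ.Lform_eval_exp_neg (hν t ht) (hmass t ht).1 (p n)

theorem isWeakSolution_of_hasDerivAt_laplace : IsWeakSolution Ψ ν := fun f hf s t hs ht => by
  have uIcc_subset : uIcc s t ⊆ Ioi 0 := fun τ hτ => (lt_min hs ht).trans_le hτ.1
  rw [restrict_Ioi_eq_self (hν t ht), restrict_Ioi_eq_self (hν s hs), ← sub_eq_iff_eq_add']
  exact (intervalIntegral.integral_eq_sub_of_hasDerivAt
    (fun τ hτ => hasDerivAt_integral_of_hasDerivAt_laplace Ψ hν_fin hν hmass hderiv hf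
      (uIcc_subset hτ))
    ((continuousOn_Lform_of_hasDerivAt_laplace Ψ hν_fin hν hmass hderiv hf).mono
      uIcc_subset).intervalIntegrable).symm

end HasDerivAtLaplace

theorem measurable_of_continuousOn_Ioi {g : ℝ → ℝ} {a c : ℝ} (hg : ContinuousOn g (Ioi a))
    (hc : ∀ t ≤ a, g t = c) : Measurable g := by
  have := hg.measurable_piecewise (g := fun _ => c) continuousOn_const measurableSet_Ioi
  convert this using 1
  ext t
  by_cases ht : t ∈ Ioi a
  · rw [piecewise_eq_of_mem _ _ _ ht]
  · rw [piecewise_eq_of_notMem _ _ _ ht, hc t (not_lt.1 ht)]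

section ConvolutionSeries

variable {μ : Measure ℝ} [IsFiniteMeasure μ] {c : ℕ → ℝ} {f : ℝ → ℝ} {a b q M : ℝ}

theorem ae_pos_weightedSum_convPow (hμ : ∀ᵐ x ∂μ, 0 < x) (hc₀ : c 0 = 0) :
    ∀ᵐ x ∂weightedSum c (convPow μ), 0 < x :=
  ae_weightedSum fun k => match k with
    | 0 => .inl hc₀
    | k + 1 => .inr (ae_pos_convPow hμ k)

theorem weightedSum_convPow_univ (hc : ∀ k, 0 ≤ c k)
    (hb : HasSum (fun k => c k * μ.real univ ^ k) b) :
    weightedSum c (convPow μ) univ = ENNReal.ofReal b :=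
  weightedSum_univ hc (by simpa only [convPow_real_univ] using hb)

theorem isFiniteMeasure_weightedSum_convPow (hc : ∀ k, 0 ≤ c k)
    (hb : HasSum (fun k => c k * μ.real univ ^ k) b) :
    IsFiniteMeasure (weightedSum c (convPow μ)) :=
  ⟨by rw [weightedSum_convPow_univ hc hb]; exact ENNReal.ofReal_lt_top⟩

theorem laplace_weightedSum_convPow (hμ : ∀ᵐ x ∂μ, 0 < x) (hc : ∀ k, 0 ≤ c k) (hc₀ : c 0 = 0)
    (hb : HasSum (fun k => c k * μ.real univ ^ k) b) (hq : 0 ≤ q)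
    (ha : HasSum (fun k => c k * laplace μ q ^ k) a) :
    laplace (weightedSum c (convPow μ)) q = a := by
  have := isFiniteMeasure_weightedSum_convPow hc hb
  have hint := integrable_of_ae_pos (ae_pos_weightedSum_convPow hμ hc₀)
    (continuousOn_exp_neg_mul q _) (abs_exp_neg_mul_le_one hq)
  have hsum := hasSum_integral_weightedSum hc hint
  simp only [integral_exp_neg_mul_convPow] at hsum
  exact hsum.unique ha

/- Convolution powers of order at least two carry little mass as soon as halving the argument of the
series roughly halves its value, so that the series is close to `c 1 • μ`. -/
theorem abs_integral_weightedSum_convPow_sub_le (hμ : ∀ᵐ x ∂μ, 0 < x) (hm : 0 < μ.real univ)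
    (hc : ∀ k, 0 ≤ c k) (hc₀ : c 0 = 0) (ha : HasSum (fun k => c k * (μ.real univ / 2) ^ k) a)
    (hb : HasSum (fun k => c k * μ.real univ ^ k) b) (hbm : b ≤ μ.real univ)
    (hf : ContinuousOn f (Ioi 0)) (hM : ∀ x ∈ Ioi 0, |f x| ≤ M) :
    |∫ x, f x ∂weightedSum c (convPow μ) - ∫ x, f x ∂μ| ≤ M * (μ.real univ + 3 * b - 8 * a) := by
  have := isFiniteMeasure_weightedSum_convPow hc hb
  have hb₀ : 0 ≤ b := hb.nonneg fun k => mul_nonneg (hc k) (by positivity)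
  have linear_le : c 1 * μ.real univ ≤ b := by
    simpa only [pow_one] using le_hasSum hb 1 fun k _ => mul_nonneg (hc k) (by positivity)
  have linear_ge : 4 * a ≤ c 1 * μ.real univ + b := four_mul_hasSum_half_le hm.le hc hc₀ ha hb
  have hc₁ : c 1 ≤ 1 := le_of_mul_le_mul_right ((linear_le.trans hbm).trans_eq (one_mul _).symm) hm
  have linear_part : ENNReal.ofReal (c 1) • μ ≤ weightedSum c (convPow μ) := by
    have := Measure.le_sum (fun k => ENNReal.ofReal (c k) • convPow μ k) 1
    simp only [convPow_one] at this
    exact this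
  have higher := abs_integral_sub_integral_le_of_le (ae_pos_weightedSum_convPow hμ hc₀) linear_part
    hf hM
  rw [integral_smul_measure, measureReal_ennreal_smul_apply, measureReal_def (weightedSum _ _),
    weightedSum_convPow_univ hc hb, ENNReal.toReal_ofReal hb₀, ENNReal.toReal_ofReal (hc 1),
    smul_eq_mul] at higher
  have missing : |(c 1 - 1) * ∫ x, f x ∂μ| ≤ (1 - c 1) * (M * μ.real univ) := by
    rw [abs_mul, abs_sub_comm, abs_of_nonneg (sub_nonneg.2 hc₁)]
    exact mul_le_mul_of_nonneg_left (abs_integral_le_of_ae_pos hμ hM) (sub_nonneg.2 hc₁)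
  have hM₀ : 0 ≤ M := (abs_nonneg _).trans (hM 1 (mem_Ioi.2 one_pos))
  calc |∫ x, f x ∂weightedSum c (convPow μ) - ∫ x, f x ∂μ|
      ≤ M * (b - c 1 * μ.real univ) + (1 - c 1) * (M * μ.real univ) := by
        refine (abs_sub_le _ (c 1 * ∫ x, f x ∂μ) _).trans (add_le_add higher ?_)
        rwa [← sub_one_mul]
    _ ≤ M * (μ.real univ + 3 * b - 8 * a) := by nlinarith

end ConvolutionSeries

namespace CriticalBranchingMechanism

section

variable {Ψ : CriticalBranchingMechanism} {u : ℝ → ℝ → ℝ} {R t : ℝ}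

theorem IsCumulantFlow.apply_zero (hu : Ψ.IsCumulantFlow R u) (hR : 0 ≤ R) (ht : 0 ≤ t) :
    u t 0 = 0 := by
  simpa using hu.mem_Icc 0 (left_mem_Icc.2 hR) t ht

theorem IsCumulantFlow.measureReal_univ_eq {μ ρ : Measure ℝ}
    (hu : Ψ.IsCumulantFlow (μ.real univ) u) (ht : 0 ≤ t)
    (hρ : laplace ρ 0 = u t (μ.real univ) - u t (μ.real univ - laplace μ 0)) :
    ρ.real univ = u t (μ.real univ) := by
  rwa [laplace_zero, laplace_zero, sub_self, hu.apply_zero measureReal_nonneg ht, sub_zero] at hρ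

theorem IsCumulantFlow.measureReal_univ_mem_Ioc {μ ρ : Measure ℝ}
    (hu : Ψ.IsCumulantFlow (μ.real univ) u) (hm : 0 < μ.real univ) (ht : 0 ≤ t)
    (hρ : laplace ρ 0 = u t (μ.real univ) - u t (μ.real univ - laplace μ 0)) :
    ρ.real univ ∈ Ioc 0 (μ.real univ) := by
  rw [hu.measureReal_univ_eq ht hρ]
  exact ⟨hu.pos _ (right_mem_Ioc.2 hm) t ht, (hu.mem_Icc _ (right_mem_Icc.2 hm.le) t ht).2⟩

theorem IsCumulantFlow.tendsto_nhdsGT_zero {x : ℝ} (hu : Ψ.IsCumulantFlow R u)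
    (hx : x ∈ Icc 0 R) : Tendsto (fun t => u t x) (𝓝[>] 0) (𝓝 x) := by
  have := (hu.hasDerivAt x hx 0 le_rfl).continuousAt.tendsto
  rw [hu.zero x hx] at this
  exact this.mono_left nhdsWithin_le_nhds

theorem IsCumulantFlow.tendsto_integral_sub_bound (hu : Ψ.IsCumulantFlow R u) (hR : 0 < R)
    (M : ℝ) : Tendsto (fun t => M * (R - 5 * u t R + 8 * u t (R / 2))) (𝓝[>] 0) (𝓝 0) := by
  have limit_full := hu.tendsto_nhdsGT_zero (right_mem_Icc.2 hR.le)
  have limit_half := hu.tendsto_nhdsGT_zero ⟨(half_pos hR).le, half_le_self hR.le⟩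
  convert ((limit_full.const_mul 5).const_sub R |>.add (limit_half.const_mul 8)).const_mul M using 2
  ring

end

section

variable {Ψ : CriticalBranchingMechanism} {μ : Measure ℝ} [IsFiniteMeasure μ] {u : ℝ → ℝ → ℝ}
  {ν : ℝ → Measure ℝ} {q t : ℝ}

theorem IsCumulantFlow.exists_measure (hu : Ψ.IsCumulantFlow (μ.real univ) u)
    (hμ : ∀ᵐ x ∂μ, 0 < x) (hm : 0 < μ.real univ) (ht : 0 ≤ t) :
    ∃ ρ : Measure ℝ, IsFiniteMeasure ρ ∧ (∀ᵐ x ∂ρ, 0 < x) ∧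
      (∀ q, 0 ≤ q → laplace ρ q = u t (μ.real univ) - u t (μ.real univ - laplace μ q)) ∧
      ∀ f M, ContinuousOn f (Ioi 0) → (∀ x ∈ Ioi 0, |f x| ≤ M) →
        |∫ x, f x ∂ρ - ∫ x, f x ∂μ| ≤
          M * (μ.real univ - 5 * u t (μ.real univ) + 8 * u t (μ.real univ / 2)) := by
  obtain ⟨c, hc, hsum⟩ := hu.isNonnegPowerSeriesOn t ht
  beta_reduce at hsum
  have hc₀ : c 0 = 0 := by
    simpa using coeff_zero_eq_of_hasSum_zero_pow (hsum 0 (left_mem_Icc.2 hm.le))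
  have hb := hsum _ (right_mem_Icc.2 hm.le)
  rw [sub_self, hu.apply_zero hm.le ht, sub_zero] at hb
  have ha := hsum _ ⟨(half_pos hm).le, half_le_self hm.le⟩
  rw [sub_half] at ha
  refine ⟨weightedSum c (convPow μ), isFiniteMeasure_weightedSum_convPow hc hb,
    ae_pos_weightedSum_convPow hμ hc₀, fun q hq => ?_, fun f M hf hM => ?_⟩
  · exact laplace_weightedSum_convPow hμ hc hc₀ hb hq (hsum _ (laplace_mem_Icc hμ hq))
  · refine (abs_integral_weightedSum_convPow_sub_le hμ hm hc hc₀ ha hb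
      (hu.mem_Icc _ (right_mem_Icc.2 hm.le) t ht).2 hf hM).trans_eq ?_
    ring

theorem IsCumulantFlow.hasDerivAt_laplace (hu : Ψ.IsCumulantFlow (μ.real univ) u)
    (hμ : ∀ᵐ x ∂μ, 0 < x) (hν : ∀ t, 0 < t → ∀ q, 0 ≤ q →
      laplace (ν t) q = u t (μ.real univ) - u t (μ.real univ - laplace μ q))
    (hq : 0 ≤ q) (ht : 0 < t) :
    HasDerivAt (fun t => laplace (ν t) q)
      (Ψ ((ν t).real univ - laplace (ν t) q) - Ψ ((ν t).real univ)) t := by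
  obtain ⟨laplace_nonneg, laplace_le⟩ := laplace_mem_Icc hμ hq
  have deriv_mass := hu.hasDerivAt _ (right_mem_Icc.2 measureReal_nonneg) t ht.le
  have deriv_bernstein := hu.hasDerivAt (μ.real univ - laplace μ q)
    ⟨sub_nonneg.2 laplace_le, sub_le_self _ laplace_nonneg⟩ t ht.le
  rw [hu.measureReal_univ_eq ht.le (hν t ht 0 le_rfl), hν t ht q hq, sub_sub_cancel,
    ← neg_sub_neg]
  exact (deriv_mass.sub deriv_bernstein).congr_of_eventuallyEq <|
    (eventually_gt_nhds ht).mono fun s hs => hν s hs q hq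

end

theorem exists_isWeakSolutionWithData (Ψ : CriticalBranchingMechanism) {μ : Measure ℝ}
    [IsFiniteMeasure μ] (hμ : ∀ᵐ x ∂μ, 0 < x) (hm : 0 < μ.real univ) :
    ∃ ν : ℝ → Measure ℝ, IsWeakSolutionWithData Ψ μ ν := by
  obtain ⟨u, hu⟩ := Ψ.exists_isCumulantFlow hm
  choose ρ hρ_fin hρ_pos hρ_laplace hρ_close using
    fun t : ℝ≥0 => hu.exists_measure hμ hm t.coe_nonneg
  have hρ_laplace' : ∀ t : ℝ, 0 < t → ∀ q, 0 ≤ q → laplace (ρ t.toNNReal) q =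
      u t (μ.real univ) - u t (μ.real univ - laplace μ q) := fun t ht => by
    simpa only [Real.coe_toNNReal t ht.le] using hρ_laplace t.toNNReal
  have hfin := fun t (_ : 0 < t) => hρ_fin (Real.toNNReal t)
  have hpos := fun t (_ : 0 < t) => hρ_pos (Real.toNNReal t)
  have hmass := fun t (ht : 0 < t) =>
    hu.measureReal_univ_mem_Ioc hm ht.le (hρ_laplace' t ht 0 le_rfl)
  have hderiv := fun (j : ℕ) t (ht : 0 < t) =>
    hu.hasDerivAt_laplace hμ hρ_laplace' j.cast_nonneg ht
  refine ⟨fun t => ρ t.toNNReal, fun t ht => ⟨hρ_fin _, fun h => (hmass t ht).1.ne' ?_, ?_⟩,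
    fun f hf => ?_, isWeakSolution_of_hasDerivAt_laplace Ψ hfin hpos hmass hderiv,
    fun f hf ⟨M, hM⟩ => ?_⟩
  · rw [← measureReal_Ioi_eq_univ (hpos t ht), measureReal_def, h, ENNReal.toReal_zero]
  · exact measure_mono_null (fun x hx => not_lt.2 hx) (ae_iff.1 (hpos t ht))
  · simp only [restrict_Ioi_eq_self (hρ_pos _)]
    refine measurable_of_continuousOn_Ioi (c := ∫ x, f x ∂ρ 0) (fun t ht =>
      (hasDerivAt_integral_of_hasDerivAt_laplace Ψ hfin hpos hmass hderiv hf
        ht).continuousAt.continuousWithinAt) fun t ht => ?_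
    rw [Real.toNNReal_of_nonpos ht]
  · simp only [restrict_Ioi_eq_self (hρ_pos _), restrict_Ioi_eq_self hμ]
    refine tendsto_iff_norm_sub_tendsto_zero.2 <| squeeze_zero' (.of_forall fun t => norm_nonneg _)
      (eventually_nhdsWithin_of_forall fun t (ht : 0 < t) => ?_)
      (hu.tendsto_integral_sub_bound hm M)
    rw [Real.norm_eq_abs]
    simpa only [Real.coe_toNNReal t ht.le] using hρ_close t.toNNReal f M hf hM

end CriticalBranchingMechanism

/-! ### Uniqueness -/

section ScalarEquation

variable {Q φ ψ : ℝ → ℝ}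

theorem antitoneOn_of_eq_integral_neg (hQ : ∀ y, 0 ≤ y → 0 ≤ Q y) (hφ : ∀ t, 0 < t → 0 ≤ φ t)
    (hφ_eq : ∀ s t, 0 < s → 0 < t → φ t = φ s + ∫ τ in s..t, -Q (φ τ)) :
    AntitoneOn φ (Ioi 0) := fun s hs t ht hst => by
  rw [hφ_eq s t hs ht, intervalIntegral.integral_neg]
  exact add_le_of_nonpos_right <| neg_nonpos.2 <|
    intervalIntegral.integral_nonneg hst fun τ hτ => hQ _ (hφ τ (lt_of_lt_of_le hs hτ.1))

theorem continuousOn_of_eq_integral_neg (hQ_mono : MonotoneOn Q (Ici 0))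
    (hQ : ∀ y, 0 ≤ y → 0 ≤ Q y) (hφ : ∀ t, 0 < t → 0 ≤ φ t)
    (hφ_eq : ∀ s t, 0 < s → 0 < t → φ t = φ s + ∫ τ in s..t, -Q (φ τ)) :
    ContinuousOn φ (Ioi 0) := fun t (ht : 0 < t) => by
  have half_le : t / 2 ≤ 2 * t := by linarith
  have hsub : Icc (t / 2) (2 * t) ⊆ Ioi 0 := fun τ hτ => (half_pos ht).trans_le hτ.1
  have hnhds : Icc (t / 2) (2 * t) ∈ 𝓝 t := Icc_mem_nhds (half_lt_self ht) (by linarith)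
  have hanti : AntitoneOn (fun τ => Q (φ τ)) (Icc (t / 2) (2 * t)) := fun τ hτ σ hσ h =>
    hQ_mono (hφ σ (hsub hσ)) (hφ τ (hsub hτ))
      (antitoneOn_of_eq_integral_neg hQ hφ hφ_eq (hsub hτ) (hsub hσ) h)
  rw [← uIcc_of_le half_le] at hanti hnhds
  have hint : IntervalIntegrable (fun τ => -Q (φ τ)) volume (t / 2) (2 * t) :=
    hanti.intervalIntegrable.neg
  have hcont := (intervalIntegral.continuousOn_primitive_interval' hint
    (mem_of_mem_nhds hnhds)).continuousAt hnhds
  refine ((hcont.const_add (φ t)).congr ?_).continuousWithinAt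
  exact (eventually_gt_nhds ht).mono fun τ hτ => (hφ_eq t τ ht hτ).symm

theorem hasDerivAt_of_eq_integral_neg (hQ_mono : MonotoneOn Q (Ici 0))
    (hQ_cont : ContinuousOn Q (Ici 0)) (hQ : ∀ y, 0 ≤ y → 0 ≤ Q y) (hφ : ∀ t, 0 < t → 0 ≤ φ t)
    (hφ_eq : ∀ s t, 0 < s → 0 < t → φ t = φ s + ∫ τ in s..t, -Q (φ τ)) {t : ℝ} (ht : 0 < t) :
    HasDerivAt φ (-Q (φ t)) t := by
  have hcont : ContinuousOn (fun τ => -Q (φ τ)) (Ioi 0) :=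
    (hQ_cont.comp (continuousOn_of_eq_integral_neg hQ_mono hQ hφ hφ_eq) hφ).neg
  have hderiv := intervalIntegral.integral_hasDerivAt_right
    (IntervalIntegrable.refl (f := fun τ => -Q (φ τ)))
    (hcont.stronglyMeasurableAtFilter isOpen_Ioi t ht) (hcont.continuousAt (Ioi_mem_nhds ht))
  exact (hderiv.const_add (φ t)).congr_of_eventuallyEq <|
    (eventually_gt_nhds ht).mono fun τ hτ => hφ_eq t τ ht hτ

theorem eqOn_of_hasDerivAt_neg (hQ_mono : MonotoneOn Q (Ici 0)) (hφ : ∀ t, 0 < t → 0 ≤ φ t)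
    (hψ : ∀ t, 0 < t → 0 ≤ ψ t) (hφ_deriv : ∀ t, 0 < t → HasDerivAt φ (-Q (φ t)) t)
    (hψ_deriv : ∀ t, 0 < t → HasDerivAt ψ (-Q (ψ t)) t) {l : ℝ}
    (hφ_lim : Tendsto φ (𝓝[>] 0) (𝓝 l)) (hψ_lim : Tendsto ψ (𝓝[>] 0) (𝓝 l)) :
    EqOn φ ψ (Ioi 0) := fun t ht => by
  have hderiv : ∀ t, 0 < t → HasDerivAt (fun t => (φ t - ψ t) ^ 2)
      (2 * (φ t - ψ t) * (-Q (φ t) - -Q (ψ t))) t := fun t ht => by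
    simpa using ((hφ_deriv t ht).fun_sub (hψ_deriv t ht)).fun_pow 2
  have hanti : AntitoneOn (fun t => (φ t - ψ t) ^ 2) (Ioi 0) := by
    refine antitoneOn_of_hasDerivWithinAt_nonpos (convex_Ioi 0)
      (fun t ht => (hderiv t ht).continuousAt.continuousWithinAt)
      (fun t ht => (hderiv t (interior_subset ht)).hasDerivWithinAt) fun t ht => ?_
    have ht := interior_subset ht
    rcases le_total (φ t) (ψ t) with h | h
    · nlinarith [hQ_mono (hφ t ht) (hψ t ht) h]
    · nlinarith [hQ_mono (hψ t ht) (hφ t ht) h]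
  have hlim : Tendsto (fun t => (φ t - ψ t) ^ 2) (𝓝[>] 0) (𝓝 0) := by
    simpa using (hφ_lim.sub hψ_lim).pow 2
  have sq_nonpos : (φ t - ψ t) ^ 2 ≤ 0 := ge_of_tendsto hlim <|
    mem_of_superset (Ioo_mem_nhdsGT (mem_Ioi.1 ht)) fun s hs => hanti hs.1 ht hs.2.le
  exact sub_eq_zero.1 (pow_eq_zero_iff two_ne_zero |>.1 (sq_nonpos.antisymm (sq_nonneg _)))

end ScalarEquation

theorem IsTestFun.sub {f g : ℝ → ℝ} (hf : IsTestFun f) (hg : IsTestFun g) : IsTestFun (f - g) := by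
  obtain ⟨hf_cont, ⟨M, hM⟩, ⟨l₀, hl₀⟩, ⟨l, hl⟩⟩ := hf
  obtain ⟨hg_cont, ⟨N, hN⟩, ⟨k₀, hk₀⟩, ⟨k, hk⟩⟩ := hg
  exact ⟨hf_cont.sub hg_cont,
    ⟨M + N, fun x hx => (abs_sub _ _).trans (add_le_add (hM x hx) (hN x hx))⟩,
    ⟨l₀ - k₀, hl₀.sub hk₀⟩, ⟨l - k, hl.sub hk⟩⟩

namespace IsWeakSolutionWithData

section

variable {Ψ : ℝ → ℝ} {μ : Measure ℝ} {ν : ℝ → Measure ℝ} {f : ℝ → ℝ} {t : ℝ}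

theorem ae_pos (hν : IsWeakSolutionWithData Ψ μ ν) (ht : 0 < t) : ∀ᵐ x ∂ν t, 0 < x :=
  ae_pos_of_Iic_eq_zero (hν.1 t ht).2.2

theorem measureReal_univ_pos (hν : IsWeakSolutionWithData Ψ μ ν) (ht : 0 < t) :
    0 < (ν t).real univ := by
  obtain ⟨_, hmass, -⟩ := hν.1 t ht
  rw [← measureReal_Ioi_eq_univ (hν.ae_pos ht)]
  exact ENNReal.toReal_pos hmass (measure_ne_top _ _)

theorem integral_eq_add_integral_Lform (hν : IsWeakSolutionWithData Ψ μ ν) (hf : IsTestFun f)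
    {s : ℝ} (hs : 0 < s) (ht : 0 < t) :
    ∫ x, f x ∂ν t = ∫ x, f x ∂ν s + ∫ τ in s..t, Lform Ψ (ν τ) f := by
  simpa only [restrict_Ioi_eq_self (hν.ae_pos hs), restrict_Ioi_eq_self (hν.ae_pos ht)] using
    hν.2.2.1 f hf s t hs ht

theorem tendsto_integral (hν : IsWeakSolutionWithData Ψ μ ν) (hf : IsTestFun f) :
    Tendsto (fun t => ∫ x, f x ∂ν t) (𝓝[>] 0) (𝓝 (∫ x in Ioi 0, f x ∂μ)) :=
  (hν.2.2.2 f hf.1 hf.2.1).congr' <| eventually_nhdsWithin_of_forall fun t ht => by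
    rw [restrict_Ioi_eq_self (hν.ae_pos ht)]

end

variable {Ψ : CriticalBranchingMechanism} {μ : Measure ℝ} {ν ν' : ℝ → Measure ℝ} {f : ℝ → ℝ}
  {t : ℝ}

theorem hasDerivAt_integral (hν : IsWeakSolutionWithData Ψ μ ν) (hf : IsTestFun f)
    (hf_nonneg : ∀ t, 0 < t → 0 ≤ ∫ x, f x ∂ν t)
    (hL : ∀ t, 0 < t → Lform Ψ (ν t) f = -Ψ (∫ x, f x ∂ν t)) (ht : 0 < t) :
    HasDerivAt (fun t => ∫ x, f x ∂ν t) (-Ψ (∫ x, f x ∂ν t)) t := by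
  refine hasDerivAt_of_eq_integral_neg (φ := fun t => ∫ x, f x ∂ν t) Ψ.eval_monotoneOn
    Ψ.continuousOn_eval (fun y => Ψ.eval_nonneg) hf_nonneg (fun s t hs ht => ?_) ht
  rw [hν.integral_eq_add_integral_Lform hf hs ht]
  congr 1
  exact intervalIntegral.integral_congr fun τ hτ => hL τ ((lt_min hs ht).trans_le hτ.1)

theorem integral_unique (hν : IsWeakSolutionWithData Ψ μ ν) (hν' : IsWeakSolutionWithData Ψ μ ν')
    (hf : IsTestFun f)
    (hL : ∀ ρ : Measure ℝ, IsFiniteMeasure ρ → (∀ᵐ x ∂ρ, 0 < x) → 0 < ρ.real univ →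
      0 ≤ ∫ x, f x ∂ρ ∧ Lform Ψ ρ f = -Ψ (∫ x, f x ∂ρ)) (ht : 0 < t) :
    ∫ x, f x ∂ν t = ∫ x, f x ∂ν' t := by
  have hLν := fun t ht => hL (ν t) (hν.1 t ht).1 (hν.ae_pos ht) (hν.measureReal_univ_pos ht)
  have hLν' := fun t ht => hL (ν' t) (hν'.1 t ht).1 (hν'.ae_pos ht) (hν'.measureReal_univ_pos ht)
  have nonneg := fun t ht => (hLν t ht).1
  have nonneg' := fun t ht => (hLν' t ht).1
  exact eqOn_of_hasDerivAt_neg Ψ.eval_monotoneOn nonneg nonneg'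
    (fun t ht => hν.hasDerivAt_integral hf nonneg (fun t ht => (hLν t ht).2) ht)
    (fun t ht => hν'.hasDerivAt_integral hf nonneg' (fun t ht => (hLν' t ht).2) ht)
    (hν.tendsto_integral hf) (hν'.tendsto_integral hf) ht

theorem laplace_zero_unique (hν : IsWeakSolutionWithData Ψ μ ν)
    (hν' : IsWeakSolutionWithData Ψ μ ν') (ht : 0 < t) : laplace (ν t) 0 = laplace (ν' t) 0 := by
  refine hν.integral_unique hν' (by simpa using isTestFun_exp_neg_natCast_mul 0)
    (fun ρ _ hρ hm => ⟨integral_nonneg fun x => (exp_pos _).le, ?_⟩) ht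
  rw [Ψ.Lform_exp_neg_mul hρ hm le_rfl, ← laplace, laplace_zero, sub_self, Ψ.eval_zero, zero_sub]

theorem laplace_natCast_unique (hν : IsWeakSolutionWithData Ψ μ ν)
    (hν' : IsWeakSolutionWithData Ψ μ ν') (ht : 0 < t) (j : ℕ) :
    laplace (ν t) j = laplace (ν' t) j := by
  let bernstein : ℝ → ℝ := (fun x => exp (-(0 * x))) - fun x => exp (-(j * x))
  have integral_bernstein : ∀ ρ : Measure ℝ, IsFiniteMeasure ρ → (∀ᵐ x ∂ρ, 0 < x) →
      ∫ x, bernstein x ∂ρ = laplace ρ 0 - laplace ρ j := fun ρ _ hρ =>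
    integral_sub (integrable_of_ae_pos hρ (continuousOn_exp_neg_mul 0 _)
      (abs_exp_neg_mul_le_one le_rfl)) (integrable_of_ae_pos hρ (continuousOn_exp_neg_mul j _)
      (abs_exp_neg_mul_le_one j.cast_nonneg))
  have hbernstein : IsTestFun bernstein :=
    (by simpa using isTestFun_exp_neg_natCast_mul 0 : IsTestFun fun x => exp (-(0 * x))).sub
      (isTestFun_exp_neg_natCast_mul j)
  have := hν.integral_unique hν' hbernstein (fun ρ hfin hρ hm => ?_) ht
  · rw [integral_bernstein _ (hν.1 t ht).1 (hν.ae_pos ht),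
      integral_bernstein _ (hν'.1 t ht).1 (hν'.ae_pos ht), hν.laplace_zero_unique hν' ht] at this
    exact sub_right_injective this
  · rw [integral_bernstein ρ hfin hρ, laplace_zero]
    refine ⟨sub_nonneg.2 (laplace_mem_Icc hρ j.cast_nonneg).2, ?_⟩
    rw [Ψ.Lform_sub hρ hm (continuousOn_exp_neg_mul 0 _) (abs_exp_neg_mul_le_one le_rfl)
      (continuousOn_exp_neg_mul j _) (abs_exp_neg_mul_le_one j.cast_nonneg),
      Ψ.Lform_exp_neg_mul hρ hm le_rfl, Ψ.Lform_exp_neg_mul hρ hm j.cast_nonneg, laplace_zero,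
      sub_self, Ψ.eval_zero]
    ring

theorem unique (hν : IsWeakSolutionWithData Ψ μ ν) (hν' : IsWeakSolutionWithData Ψ μ ν')
    (ht : 0 < t) : ν t = ν' t := by
  have := (hν.1 t ht).1
  have := (hν'.1 t ht).1
  exact ext_of_laplace_natCast (hν.ae_pos ht) (hν'.ae_pos ht)
    (hν.laplace_natCast_unique hν' ht)

end IsWeakSolutionWithData

theorem exists_criticalBranchingMechanism_eqOn {Ψ : ℝ → ℝ} {β : ℝ} {ρ : Measure ℝ} (hβ : 0 ≤ β)
    (hρ : ∫⁻ x in Ioi (0 : ℝ), ENNReal.ofReal (min x (x ^ 2)) ∂ρ < ⊤)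
    (hΨ : ∀ u : ℝ, 0 < u →
      Ψ u = β * u ^ 2 + ∫ x in Ioi (0 : ℝ), (exp (-(u * x)) - 1 + u * x) ∂ρ) :
    ∃ Φ : CriticalBranchingMechanism, EqOn Ψ Φ (Ioi 0) := by
  have ae_pos : ∀ᵐ x ∂ρ.restrict (Ioi 0), 0 < x := ae_restrict_mem measurableSet_Ioi
  have measurable_min : Measurable fun x : ℝ => min x (x ^ 2) := by fun_prop
  have min_nonneg : ∀ᵐ x ∂ρ.restrict (Ioi 0), 0 ≤ min x (x ^ 2) :=
    ae_pos.mono fun x hx => le_min hx.le (sq_nonneg x)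
  exact ⟨⟨⟨β, hβ⟩, ρ.restrict (Ioi 0), ae_pos, measurable_min.aestronglyMeasurable,
    (hasFiniteIntegral_iff_ofReal min_nonneg).2 hρ⟩, hΨ⟩

end

/-- existence and uniqueness of the weak solution of the
generalized Smoluchowski equation with finite nonzero initial data. -/
theorem exists_unique_weak_solution
    (Ψ : ℝ → ℝ) (β : ℝ) (π : Measure ℝ)
    (hβ : 0 ≤ β)
    (hπfin : ∫⁻ x in Ioi (0:ℝ), ENNReal.ofReal (min x (x ^ 2)) ∂π < ⊤)
    (hΨ : ∀ u : ℝ, 0 < u →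
      Ψ u = β * u ^ 2 + ∫ x in Ioi (0:ℝ), (Real.exp (-(u * x)) - 1 + u * x) ∂π)
    (ν₀ : Measure ℝ) (hν₀fin : IsFiniteMeasure ν₀)
    (hν₀c : ν₀ (Iic 0) = 0) (hν₀nz : ν₀ (Ioi 0) ≠ 0) :
    ∃ ν : ℝ → Measure ℝ, IsWeakSolutionWithData Ψ ν₀ ν ∧
      ∀ ν' : ℝ → Measure ℝ, IsWeakSolutionWithData Ψ ν₀ ν' →
        ∀ t : ℝ, 0 < t → ν' t = ν t := by
  obtain ⟨Φ, hΦ⟩ := exists_criticalBranchingMechanism_eqOn hβ hπfin hΨ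
  have hν₀_pos : ∀ᵐ x ∂ν₀, 0 < x := ae_pos_of_Iic_eq_zero hν₀c
  have hν₀_mass : 0 < ν₀.real univ := by
    rw [← measureReal_Ioi_eq_univ hν₀_pos]
    exact ENNReal.toReal_pos hν₀nz (measure_ne_top _ _)
  obtain ⟨ν, hν⟩ := Φ.exists_isWeakSolutionWithData hν₀_pos hν₀_mass
  exact ⟨ν, hν.congr hΦ.symm, fun ν' hν' t ht => (hν'.congr hΦ).unique hν ht⟩
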